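/- arXiv:1511.01132 — 5 statements merged into one kernel-verified Lean document; each statement's English description precedes it below -/
import Mathlib

section
/- In the share-model simultaneous first price auction with a mixed Nash equilibrium σ and parameters α > 1, γ > 1, the total budget of bidders outside I is small: Σ_{i∈Ī} B_i ≤ α·(γ + n/h)·REV(σ) + Σ_{i∈Ī₃} B_i. -/
/-!
Share-model simultaneous first price auction with `n` additive budgeted bidders,
`m` items, each divided into `h` identical shares.  Main theorem: for every mixed
Nash equilibrium `σ`, the optimal Liquid Welfare is at most `51.5` times the
expected Liquid Welfare at equilibrium, provided `h ≥ n ≥ 0` and `h ≥ 1`.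
-/

open Finset

/-- A share-model simultaneous first price auction: additive values `v i j ≥ 0`
(each of the `h` shares of item `j` is worth `v i j / h` to bidder `i`), budgets
`B i ≥ 0`, and a deterministic allocation rule `win` awarding every share to a
bidder with the highest bid on it (the winner pays her own bid). -/
structure ShareAuction (n m h : ℕ) where
  v : Fin n → Fin m → ℝ
  v_nonneg : ∀ i j, 0 ≤ v i j
  B : Fin n → ℝ
  B_nonneg : ∀ i, 0 ≤ B i
  win : (Fin n → Fin m → Fin h → ℝ) → Fin m → Fin h → Fin n
  win_max : ∀ (b : Fin n → Fin m → Fin h → ℝ) (j : Fin m) (ℓ : Fin h) (i : Fin n),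
    b i j ℓ ≤ b (win b j ℓ) j ℓ

namespace ShareAuction

variable {n m h : ℕ}

/-- The value bidder `i` derives from the shares she wins under bid profile `b`. -/
noncomputable def val (A : ShareAuction n m h) (i : Fin n) (b : Fin n → Fin m → Fin h → ℝ) : ℝ :=
  ∑ j : Fin m, ∑ ℓ : Fin h, if A.win b j ℓ = i then A.v i j / h else 0

/-- First-price payment: bidder `i` pays her own bid on every share she wins. -/
noncomputable def pay (A : ShareAuction n m h) (i : Fin n) (b : Fin n → Fin m → Fin h → ℝ) : ℝ :=
  ∑ j : Fin m, ∑ ℓ : Fin h, if A.win b j ℓ = i then b i j ℓ else 0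

/-- Quasilinear utility. -/
noncomputable def util (A : ShareAuction n m h) (i : Fin n) (b : Fin n → Fin m → Fin h → ℝ) : ℝ :=
  A.val i b - A.pay i b

end ShareAuction

/-- A mixed bid profile: a product distribution, bidder `i` placing probability
`p i k` on the (nonnegative) bid vector `β i k`, with finite support `Fin (K i)`. -/
structure MixedProfile (n m h : ℕ) where
  K : Fin n → ℕ
  p : ∀ i, Fin (K i) → ℝ
  p_nonneg : ∀ i k, 0 ≤ p i k
  p_sum : ∀ i, ∑ k, p i k = 1
  β : ∀ i, Fin (K i) → Fin m → Fin h → ℝ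
  β_nonneg : ∀ i k j ℓ, 0 ≤ β i k j ℓ

namespace MixedProfile

variable {n m h : ℕ}

/-- Probability of the sample point `ω` of the product distribution. -/
noncomputable def prob (σ : MixedProfile n m h) (ω : ∀ i, Fin (σ.K i)) : ℝ := ∏ i, σ.p i (ω i)

/-- The pure bid profile realized at sample point `ω`. -/
def bids (σ : MixedProfile n m h) (ω : ∀ i, Fin (σ.K i)) :
    Fin n → Fin m → Fin h → ℝ :=
  fun i => σ.β i (ω i)

/-- Expectation of a function of the bid profile under `σ`. -/
noncomputable def expect (σ : MixedProfile n m h)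
    (f : (Fin n → Fin m → Fin h → ℝ) → ℝ) : ℝ :=
  ∑ ω : ∀ i, Fin (σ.K i), σ.prob ω * f (σ.bids ω)

end MixedProfile

/-- `σ` is a mixed Nash equilibrium: payments stay within budgets almost surely,
and no bidder can profit in expectation by deviating to any deterministic
nonnegative bid vector whose bids sum to at most her budget. -/
def IsMixedNash {n m h : ℕ} (A : ShareAuction n m h) (σ : MixedProfile n m h) : Prop :=
  (∀ i (ω : ∀ i, Fin (σ.K i)), σ.prob ω ≠ 0 → A.pay i (σ.bids ω) ≤ A.B i) ∧
  ∀ i (b' : Fin m → Fin h → ℝ), (∀ j ℓ, 0 ≤ b' j ℓ) →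
    (∑ j : Fin m, ∑ ℓ : Fin h, b' j ℓ) ≤ A.B i →
    σ.expect (A.util i) ≥
      ∑ ω : ∀ i, Fin (σ.K i), σ.prob ω * A.util i (Function.update (σ.bids ω) i b')

/-- Expected Liquid Welfare of a mixed profile. -/
noncomputable def LW {n m h : ℕ} (A : ShareAuction n m h) (σ : MixedProfile n m h) : ℝ :=
  ∑ i, σ.expect (fun b => min (A.val i b) (A.B i))

/-- The value bidder `i` derives from a deterministic allocation of shares. -/
noncomputable def allocVal {n m h : ℕ} (A : ShareAuction n m h) (i : Fin n)
    (alloc : Fin m → Fin h → Fin n) : ℝ :=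
  ∑ j : Fin m, ∑ ℓ : Fin h, if alloc j ℓ = i then A.v i j / h else 0

section Quantities

variable {n m h : ℕ}

/-- The winning bid `p_j^ℓ(b) = max_i b_{ij}^ℓ` on share `ℓ` of item `j`
(the winner's bid, which is maximal by `win_max`). -/
noncomputable def wbid (A : ShareAuction n m h) (b : Fin n → Fin m → Fin h → ℝ)
    (j : Fin m) (ℓ : Fin h) : ℝ :=
  b (A.win b j ℓ) j ℓ

/-- Item price `p̄_j = α · Σ_ℓ E_{b∼σ}[p_j^ℓ(b)]`. -/
noncomputable def pbar (A : ShareAuction n m h) (σ : MixedProfile n m h) (α : ℝ)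
    (j : Fin m) : ℝ :=
  α * σ.expect (fun b => ∑ ℓ : Fin h, wbid A b j ℓ)

/-- Expected revenue `REV(σ) = (1/α) Σ_j p̄_j`. -/
noncomputable def REV (A : ShareAuction n m h) (σ : MixedProfile n m h) (α : ℝ) : ℝ :=
  (1 / α) * ∑ j : Fin m, pbar A σ α j

/-- `q i j`: expected fraction of the `h` shares of item `j` won by bidder `i`. -/
noncomputable def q (A : ShareAuction n m h) (σ : MixedProfile n m h)
    (i : Fin n) (j : Fin m) : ℝ :=
  σ.expect (fun b => (∑ ℓ : Fin h, if A.win b j ℓ = i then (1 : ℝ) else 0) / h)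

/-- `Q i = Pr_{b∼σ}[v_i(x_i(b)) ≥ B_i]`. -/
noncomputable def Qbig (A : ShareAuction n m h) (σ : MixedProfile n m h) (i : Fin n) : ℝ :=
  ∑ ω : ∀ i, Fin (σ.K i), if A.B i ≤ A.val i (σ.bids ω) then σ.prob ω else 0

/-- High value items `J_i = {j : v_{ij} ≥ p̄_j}`. -/
noncomputable def Jset (A : ShareAuction n m h) (σ : MixedProfile n m h) (α : ℝ)
    (i : Fin n) : Finset (Fin m) :=
  univ.filter fun j => pbar A σ α j ≤ A.v i j

/-- `I₁ = {i : γ · Σ_{j ∈ J_i} p̄_j q_{ij} ≤ B_i}`. -/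
noncomputable def I1 (A : ShareAuction n m h) (σ : MixedProfile n m h) (α γ : ℝ) :
    Finset (Fin n) :=
  univ.filter fun i => γ * ∑ j ∈ Jset A σ α i, pbar A σ α j * q A σ i j ≤ A.B i

/-- `I₂ = {i : Σ_j p̄_j / h ≤ B_i}`. -/
noncomputable def I2 (A : ShareAuction n m h) (σ : MixedProfile n m h) (α : ℝ) :
    Finset (Fin n) :=
  univ.filter fun i => (∑ j : Fin m, pbar A σ α j / h) ≤ A.B i

/-- `I₃ = {i : Q_i ≤ 1/(2γ)}`. -/
noncomputable def I3 (A : ShareAuction n m h) (σ : MixedProfile n m h) (γ : ℝ) :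
    Finset (Fin n) :=
  univ.filter fun i => Qbig A σ i ≤ 1 / (2 * γ)

/-- `I = I₁ ∩ I₂ ∩ I₃`. -/
noncomputable def Iset (A : ShareAuction n m h) (σ : MixedProfile n m h) (α γ : ℝ) :
    Finset (Fin n) :=
  I1 A σ α γ ∩ I2 A σ α ∩ I3 A σ γ

end Quantities

/-!
A bidder outside `I` fails one of the three conditions defining it. If she fails the first, her
budget is below `γ` times the part of the prices she is charged for the fractions `q i j`; since
these fractions of each item sum to one, such bidders have total budget at most `γ ∑ j, p̄ j`.
If she fails the second, her budget is below `(∑ j, p̄ j) / h`, and there are at most `n` such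
bidders. The prices themselves sum to `α` times the revenue.
-/

lemma sum_union_le_sum_add_sum {ι M : Type*} [DecidableEq ι] [AddCommMonoid M] [PartialOrder M]
    [IsOrderedAddMonoid M] {s t : Finset ι} {f : ι → M} (hf : ∀ i ∈ s ∩ t, 0 ≤ f i) :
    ∑ i ∈ s ∪ t, f i ≤ ∑ i ∈ s, f i + ∑ i ∈ t, f i := by
  rw [← sum_union_inter]
  exact le_add_of_nonneg_right (sum_nonneg hf)

namespace MixedProfile

variable {n m h : ℕ} (σ : MixedProfile n m h)

lemma prob_nonneg (ω : ∀ i, Fin (σ.K i)) : 0 ≤ σ.prob ω :=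
  prod_nonneg fun i _ => σ.p_nonneg i (ω i)

lemma sum_prob : ∑ ω, σ.prob ω = 1 := by
  simp only [prob, ← Fintype.prod_sum, σ.p_sum, prod_const_one]

lemma expect_nonneg {f : (Fin n → Fin m → Fin h → ℝ) → ℝ} (hf : ∀ ω, 0 ≤ f (σ.bids ω)) :
    0 ≤ σ.expect f :=
  sum_nonneg fun ω _ => mul_nonneg (σ.prob_nonneg ω) (hf ω)

lemma expect_const (c : ℝ) : σ.expect (fun _ => c) = c := by
  rw [expect, ← sum_mul, sum_prob, one_mul]

lemma expect_sum {ι : Type*} (s : Finset ι) (f : ι → (Fin n → Fin m → Fin h → ℝ) → ℝ) :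
    σ.expect (fun b => ∑ i ∈ s, f i b) = ∑ i ∈ s, σ.expect (f i) := by
  simp only [expect, mul_sum]
  exact sum_comm

end MixedProfile

section Bounds

variable {n m h : ℕ} (A : ShareAuction n m h) (σ : MixedProfile n m h) {α γ : ℝ}

lemma pbar_nonneg (hα : 0 ≤ α) (j : Fin m) : 0 ≤ pbar A σ α j :=
  mul_nonneg hα <| σ.expect_nonneg fun _ => sum_nonneg fun _ _ => σ.β_nonneg _ _ _ _

lemma mul_REV (hα : α ≠ 0) : α * REV A σ α = ∑ j, pbar A σ α j := by
  rw [REV, one_div, mul_inv_cancel_left₀ hα]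

lemma q_nonneg (i : Fin n) (j : Fin m) : 0 ≤ q A σ i j :=
  σ.expect_nonneg fun _ => div_nonneg
    (sum_nonneg fun _ _ => ite_nonneg zero_le_one le_rfl) h.cast_nonneg

lemma sum_fraction_won (hh : 0 < h) (b : Fin n → Fin m → Fin h → ℝ) (j : Fin m) :
    ∑ i, (∑ ℓ, if A.win b j ℓ = i then (1 : ℝ) else 0) / h = 1 := by
  have hh' : (h : ℝ) ≠ 0 := by exact_mod_cast hh.ne'
  rw [← sum_div, sum_comm]
  simp [hh']

lemma sum_q (hh : 0 < h) (j : Fin m) : ∑ i, q A σ i j = 1 := by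
  simp only [q, ← σ.expect_sum, sum_fraction_won A hh, σ.expect_const]

lemma sum_sum_pbar_mul_q (hh : 0 < h) :
    ∑ i, ∑ j, pbar A σ α j * q A σ i j = ∑ j, pbar A σ α j := by
  rw [sum_comm]
  simp only [← mul_sum, sum_q A σ hh, mul_one]

lemma budget_le_of_notMem_I1 (hα : 0 ≤ α) (hγ : 0 ≤ γ) {i : Fin n} (hi : i ∉ I1 A σ α γ) :
    A.B i ≤ γ * ∑ j, pbar A σ α j * q A σ i j := by
  have hB : A.B i < γ * ∑ j ∈ Jset A σ α i, pbar A σ α j * q A σ i j := by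
    simpa only [I1, mem_filter_univ, not_le] using hi
  refine hB.le.trans (mul_le_mul_of_nonneg_left ?_ hγ)
  exact sum_le_univ_sum_of_nonneg fun j => mul_nonneg (pbar_nonneg A σ hα j) (q_nonneg A σ i j)

lemma budget_lt_of_notMem_I2 {i : Fin n} (hi : i ∉ I2 A σ α) :
    A.B i < (∑ j, pbar A σ α j) / h := by
  simpa only [I2, mem_filter_univ, not_le, ← sum_div] using hi

lemma sum_budget_outside_I1_le (hh : 0 < h) (hα : 0 ≤ α) (hγ : 0 ≤ γ) :
    ∑ i ∈ univ \ I1 A σ α γ, A.B i ≤ γ * ∑ j, pbar A σ α j :=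
  calc ∑ i ∈ univ \ I1 A σ α γ, A.B i
      ≤ ∑ i ∈ univ \ I1 A σ α γ, γ * ∑ j, pbar A σ α j * q A σ i j :=
        sum_le_sum fun _ hi => budget_le_of_notMem_I1 A σ hα hγ (mem_sdiff.1 hi).2
    _ ≤ ∑ i, γ * ∑ j, pbar A σ α j * q A σ i j :=
        sum_le_univ_sum_of_nonneg fun _ => mul_nonneg hγ <| sum_nonneg fun j _ =>
          mul_nonneg (pbar_nonneg A σ hα j) (q_nonneg A σ _ j)
    _ = γ * ∑ j, pbar A σ α j := by rw [← mul_sum, sum_sum_pbar_mul_q A σ hh]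

lemma sum_budget_outside_I2_le (hα : 0 ≤ α) :
    ∑ i ∈ univ \ I2 A σ α, A.B i ≤ n / h * ∑ j, pbar A σ α j :=
  calc ∑ i ∈ univ \ I2 A σ α, A.B i
      ≤ ∑ _i ∈ univ \ I2 A σ α, (∑ j, pbar A σ α j) / h :=
        sum_le_sum fun _ hi => (budget_lt_of_notMem_I2 A σ (mem_sdiff.1 hi).2).le
    _ ≤ ∑ _i : Fin n, (∑ j, pbar A σ α j) / h :=
        sum_le_univ_sum_of_nonneg fun _ =>
          div_nonneg (sum_nonneg fun j _ => pbar_nonneg A σ hα j) h.cast_nonneg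
    _ = n / h * ∑ j, pbar A σ α j := by
        rw [sum_const, card_fin, nsmul_eq_mul, mul_div_assoc', div_mul_eq_mul_div]

lemma sum_budget_outside_Iset_le :
    ∑ i ∈ univ \ Iset A σ α γ, A.B i ≤
      ∑ i ∈ univ \ I1 A σ α γ, A.B i + ∑ i ∈ univ \ I2 A σ α, A.B i +
        ∑ i ∈ univ \ I3 A σ γ, A.B i := by
  rw [Iset, sdiff_inter_distrib_right, sdiff_inter_distrib_right]
  have hB : ∀ s : Finset (Fin n), ∀ i ∈ s, 0 ≤ A.B i := fun _ i _ => A.B_nonneg i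
  exact (sum_union_le_sum_add_sum (hB _)).trans
    (add_le_add_left (sum_union_le_sum_add_sum (hB _)) _)

end Bounds

theorem budget_outside_I_small_general {n m h : ℕ} (hh : 0 < h) {α γ : ℝ} (hα : 0 < α)
    (hγ : 0 < γ) (A : ShareAuction n m h) (σ : MixedProfile n m h) :
    ∑ i ∈ univ \ Iset A σ α γ, A.B i ≤
      α * (γ + (n : ℝ) / (h : ℝ)) * REV A σ α + ∑ i ∈ univ \ I3 A σ γ, A.B i := by
  have hREV : α * (γ + (n : ℝ) / h) * REV A σ α =
      γ * ∑ j, pbar A σ α j + n / h * ∑ j, pbar A σ α j := by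
    rw [mul_right_comm, mul_REV A σ hα.ne', mul_comm, add_mul]
  rw [hREV]
  have hI1 := sum_budget_outside_I1_le A σ hh hα.le hγ.le
  have hI2 := sum_budget_outside_I2_le A σ hα.le
  exact (sum_budget_outside_Iset_le A σ).trans (by gcongr)

/-- **The total budget of bidders outside `I` is small**:
`Σ_{i ∈ Ī} B_i ≤ α (γ + n/h) REV(σ) + Σ_{i ∈ Ī₃} B_i`. -/
theorem budget_outside_I_small {n m h : ℕ} (hh : 0 < h)
    (α γ : ℝ) (hα : 1 < α) (hγ : 1 < γ)
    (A : ShareAuction n m h) (σ : MixedProfile n m h) (hNash : IsMixedNash A σ) :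
    ∑ i ∈ univ \ Iset A σ α γ, A.B i ≤
      α * (γ + (n : ℝ) / (h : ℝ)) * REV A σ α + ∑ i ∈ univ \ I3 A σ γ, A.B i :=
  budget_outside_I_small_general hh (zero_lt_one.trans hα) (zero_lt_one.trans hγ) A σ
end

section
/- Consider a simultaneous first price auction where every bidder has a fractionally subadditive (XOS) valuation and a budget. If b is a pure Nash equilibrium (against all deviations whose bids sum to at most the deviator's budget) in which every bidder's payment is at most her budget, then LW(b) ≥ OPT/2. -/
/-!
Pure Nash equilibria of simultaneous first price auctions with fractionally
subadditive (XOS) budgeted bidders have Liquid Welfare at least half of the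
optimal Liquid Welfare.
-/

open Finset

/-- `v` is fractionally subadditive (XOS): the pointwise maximum of a finite
nonempty family of (nonnegative) additive valuations. -/
def IsXOS {m : ℕ} (v : Finset (Fin m) → ℝ) : Prop :=
  ∃ (k : ℕ) (a : Fin (k + 1) → Fin m → ℝ),
    (∀ t j, 0 ≤ a t j) ∧
    ∀ S : Finset (Fin m),
      v S = (Finset.univ : Finset (Fin (k + 1))).sup'
        ⟨0, Finset.mem_univ 0⟩ (fun t => ∑ j ∈ S, a t j)

/-- A simultaneous first price auction on `m` indivisible items with `n` bidders:
monotone normalized valuations `v i`, budgets `B i ≥ 0`, and a deterministic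
allocation rule `win` awarding every item to a bidder with the highest bid on it
(a strictly highest bidder always wins); each winner pays her own bid. -/
structure ItemAuctionFP (n m : ℕ) where
  v : Fin n → Finset (Fin m) → ℝ
  v_empty : ∀ i, v i ∅ = 0
  v_mono : ∀ i (S T : Finset (Fin m)), S ⊆ T → v i S ≤ v i T
  B : Fin n → ℝ
  B_nonneg : ∀ i, 0 ≤ B i
  win : (Fin n → Fin m → ℝ) → Fin m → Fin n
  win_max : ∀ (b : Fin n → Fin m → ℝ) (j : Fin m) (i : Fin n), b i j ≤ b (win b j) j
  win_strict : ∀ (b : Fin n → Fin m → ℝ) (j : Fin m) (i : Fin n),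
    (∀ k, k ≠ i → b k j < b i j) → win b j = i

namespace ItemAuctionFP

variable {n m : ℕ}

/-- The set of items bidder `i` wins under profile `b`. -/
def won (A : ItemAuctionFP n m) (i : Fin n) (b : Fin n → Fin m → ℝ) : Finset (Fin m) :=
  univ.filter fun j => A.win b j = i

/-- First-price payment of bidder `i`. -/
noncomputable def pay (A : ItemAuctionFP n m) (i : Fin n) (b : Fin n → Fin m → ℝ) : ℝ :=
  ∑ j ∈ A.won i b, b i j

/-- Quasilinear utility of bidder `i`. -/
noncomputable def util (A : ItemAuctionFP n m) (i : Fin n) (b : Fin n → Fin m → ℝ) : ℝ :=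
  A.v i (A.won i b) - A.pay i b

/-- Liquid Welfare of a pure bid profile. -/
noncomputable def LW (A : ItemAuctionFP n m) (b : Fin n → Fin m → ℝ) : ℝ :=
  ∑ i, min (A.v i (A.won i b)) (A.B i)

end ItemAuctionFP

/-!
At an equilibrium, any bidder could win a bundle `T` by bidding just above its price, i.e. the sum
of the winning bids on it. If she cannot afford this, the price of `T` is at least her budget
and hence her liquid value for `T`; if she can, equilibrium bounds her value for `T` by her current
value plus that price. Either way her liquid value for `T` is at most her current liquid value
plus the price of `T`. Summing over any allocation, the prices add up to the revenue, which is at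
most the liquid welfare since no bidder pays more than her budget or, as bidding zero is always
possible, her value.
-/

namespace ItemAuctionFP

variable {n m : ℕ} {A : ItemAuctionFP n m} {b : Fin n → Fin m → ℝ}

/-- The price of item `j` under profile `b`: the bid of its winner, which is the highest bid on it.
A bidder who exceeds it is sure to win `j`. -/
def price (A : ItemAuctionFP n m) (b : Fin n → Fin m → ℝ) (j : Fin m) : ℝ :=
  b (A.win b j) j

/-- Pure Nash equilibrium. As in the paper's model of budgets, a deviation is admissible when the
sum of *all* its bids, not just of the winning ones, is within the budget. -/
def IsNash (A : ItemAuctionFP n m) (b : Fin n → Fin m → ℝ) : Prop :=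
  ∀ i (b' : Fin m → ℝ), (∀ j, 0 ≤ b' j) → (∑ j, b' j) ≤ A.B i →
    A.util i (Function.update b i b') ≤ A.util i b

theorem mem_won {i : Fin n} {j : Fin m} : j ∈ A.won i b ↔ A.win b j = i := by
  simp [won]

theorem value_nonneg (A : ItemAuctionFP n m) (i : Fin n) (T : Finset (Fin m)) : 0 ≤ A.v i T :=
  A.v_empty i ▸ A.v_mono i ∅ T (empty_subset T)

theorem pay_le_sum_bid {i : Fin n} (hb : ∀ j, 0 ≤ b i j) : A.pay i b ≤ ∑ j, b i j :=
  sum_le_sum_of_subset_of_nonneg (subset_univ _) fun j _ _ => hb j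

theorem pay_eq_sum_price (A : ItemAuctionFP n m) (b : Fin n → Fin m → ℝ) (i : Fin n) :
    A.pay i b = ∑ j ∈ A.won i b, A.price b j :=
  sum_congr rfl fun _ hj => by rw [price, mem_won.mp hj]

theorem pay_nonneg (hp : ∀ j, 0 ≤ A.price b j) (i : Fin n) : 0 ≤ A.pay i b :=
  pay_eq_sum_price A b i ▸ sum_nonneg fun j _ => hp j

theorem sum_pay_eq_sum_price (A : ItemAuctionFP n m) (b : Fin n → Fin m → ℝ) :
    ∑ i, A.pay i b = ∑ j, A.price b j := by
  simp only [pay_eq_sum_price, won, sum_fiberwise]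

theorem subset_won_update {i : Fin n} {T : Finset (Fin m)} {c : Fin m → ℝ}
    (hc : ∀ j ∈ T, A.price b j < c j) : T ⊆ A.won i (Function.update b i c) := by
  refine fun j hj => mem_won.mpr (A.win_strict _ j i fun k hk => ?_)
  rw [Function.update_of_ne hk, Function.update_self]
  exact (A.win_max b j k).trans_lt (hc j hj)

theorem value_sub_sum_le_util_update {i : Fin n} {T : Finset (Fin m)} {c : Fin m → ℝ}
    (hc : ∀ j, 0 ≤ c j) (hT : ∀ j ∈ T, A.price b j < c j) :
    A.v i T - ∑ j, c j ≤ A.util i (Function.update b i c) := by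
  have hpay : A.pay i (Function.update b i c) ≤ ∑ j, c j := by
    simpa using pay_le_sum_bid (A := A) (b := Function.update b i c) (i := i) (by simpa using hc)
  exact sub_le_sub (A.v_mono i _ _ (subset_won_update hT)) hpay

namespace IsNash

theorem value_sub_sum_le_util (h : A.IsNash b) {i : Fin n} {T : Finset (Fin m)} {c : Fin m → ℝ}
    (hc : ∀ j ∈ T, 0 ≤ c j) (hT : ∀ j ∈ T, A.price b j < c j) (hB : ∑ j ∈ T, c j ≤ A.B i) :
    A.v i T - ∑ j ∈ T, c j ≤ A.util i b := by
  let c' : Fin m → ℝ := fun j => if j ∈ T then c j else 0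
  have hc' : ∀ j, 0 ≤ c' j := fun j => by
    by_cases hj : j ∈ T
    · simpa [c', hj] using hc j hj
    · simp [c', hj]
  have hsum : ∑ j, c' j = ∑ j ∈ T, c j := by simp [c']
  have hT' : ∀ j ∈ T, A.price b j < c' j := fun j hj => by simpa [c', hj] using hT j hj
  rw [← hsum] at hB ⊢
  exact (value_sub_sum_le_util_update hc' hT').trans (h i c' hc' hB)

theorem util_nonneg (h : A.IsNash b) (i : Fin n) : 0 ≤ A.util i b := by
  have hzero := h.value_sub_sum_le_util (i := i) (T := ∅) (c := 0)
    (by simp) (by simp) (by simpa using A.B_nonneg i)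
  simpa [A.v_empty] using hzero

theorem pay_le_value (h : A.IsNash b) (i : Fin n) : A.pay i b ≤ A.v i (A.won i b) :=
  sub_nonneg.mp (h.util_nonneg i)

open Filter Topology in
theorem value_sub_sum_price_le_util (h : A.IsNash b) (hp : ∀ j, 0 ≤ A.price b j) {i : Fin n}
    {T : Finset (Fin m)} (hB : ∑ j ∈ T, A.price b j < A.B i) :
    A.v i T - ∑ j ∈ T, A.price b j ≤ A.util i b := by
  let cost : ℝ → ℝ := fun ε => ∑ j ∈ T, (A.price b j + ε)
  have hcost : Tendsto cost (𝓝[>] 0) (𝓝 (∑ j ∈ T, A.price b j)) := by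
    have hcont : Continuous cost := by fun_prop
    simpa [cost] using (hcont.tendsto 0).mono_left nhdsWithin_le_nhds
  refine le_of_tendsto (hcost.const_sub _) ?_
  filter_upwards [hcost.eventually_lt_const hB, self_mem_nhdsWithin] with ε hεB hεpos
  exact h.value_sub_sum_le_util (fun j _ => add_nonneg (hp j) (le_of_lt hεpos))
    (fun j _ => lt_add_of_pos_right _ hεpos) hεB.le

theorem min_value_le_add_sum_price (h : A.IsNash b) (hp : ∀ j, 0 ≤ A.price b j) (i : Fin n)
    (T : Finset (Fin m)) :
    min (A.v i T) (A.B i) ≤ min (A.v i (A.won i b)) (A.B i) + ∑ j ∈ T, A.price b j := by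
  rcases le_or_gt (A.B i) (∑ j ∈ T, A.price b j) with hunaffordable | haffordable
  · calc min (A.v i T) (A.B i) ≤ ∑ j ∈ T, A.price b j := (min_le_right _ _).trans hunaffordable
      _ ≤ _ := le_add_of_nonneg_left (le_min (A.value_nonneg i _) (A.B_nonneg i))
  · have hvalue : A.v i T ≤ A.v i (A.won i b) + ∑ j ∈ T, A.price b j :=
      sub_le_iff_le_add.mp <| (h.value_sub_sum_price_le_util hp haffordable).trans <|
        sub_le_self _ (pay_nonneg hp i)
    rw [← min_add_add_right]
    exact min_le_min hvalue (le_add_of_nonneg_right (sum_nonneg fun j _ => hp j))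

theorem sum_min_value_le_LW_add_sum_price (h : A.IsNash b) (hp : ∀ j, 0 ≤ A.price b j)
    (S : Fin m → Fin n) :
    ∑ i, min (A.v i (univ.filter fun j => S j = i)) (A.B i) ≤ A.LW b + ∑ j, A.price b j := by
  rw [LW, ← sum_fiberwise univ S (A.price b), ← sum_add_distrib]
  exact sum_le_sum fun i _ => h.min_value_le_add_sum_price hp i _

theorem sum_price_le_LW (h : A.IsNash b) (hbudget : ∀ i, A.pay i b ≤ A.B i) :
    ∑ j, A.price b j ≤ A.LW b := by
  rw [← sum_pay_eq_sum_price]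
  exact sum_le_sum fun i _ => le_min (h.pay_le_value i) (hbudget i)

end IsNash

end ItemAuctionFP

theorem liquid_poa_pure_first_price_general {n m : ℕ} (A : ItemAuctionFP n m)
    (b : Fin n → Fin m → ℝ) (hb_nonneg : ∀ i j, 0 ≤ b i j)
    (hb_budget : ∀ i, A.pay i b ≤ A.B i) (hNash : A.IsNash b) (S : Fin m → Fin n) :
    ∑ i, min (A.v i (univ.filter fun j => S j = i)) (A.B i) ≤ 2 * A.LW b :=
  calc
    _ ≤ A.LW b + ∑ j, A.price b j :=
      hNash.sum_min_value_le_LW_add_sum_price (fun j => hb_nonneg _ j) S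
    _ ≤ A.LW b + A.LW b := by gcongr; exact hNash.sum_price_le_LW hb_budget
    _ = 2 * A.LW b := (two_mul _).symm

/-- **Liquid price of anarchy of pure Nash equilibria of simultaneous first price
auctions with XOS bidders**: if `b` is a pure Nash equilibrium (against all
nonnegative deviations whose bids sum to at most the deviator's budget) in which
every bidder's payment is within her budget, then the Liquid Welfare of every
allocation (in particular the optimal one) is at most `2 · LW(b)`. -/
theorem liquid_poa_pure_first_price {n m : ℕ} (A : ItemAuctionFP n m)
    (hXOS : ∀ i, IsXOS (A.v i))
    (b : Fin n → Fin m → ℝ) (hb_nonneg : ∀ i j, 0 ≤ b i j)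
    (hb_budget : ∀ i, A.pay i b ≤ A.B i)
    (hNash : ∀ i (b' : Fin m → ℝ), (∀ j, 0 ≤ b' j) → (∑ j : Fin m, b' j) ≤ A.B i →
      A.util i (Function.update b i b') ≤ A.util i b)
    (S : Fin m → Fin n) :
    ∑ i, min (A.v i (univ.filter fun j => S j = i)) (A.B i) ≤ 2 * A.LW b :=
  liquid_poa_pure_first_price_general A b hb_nonneg hb_budget hNash S
end

section
/- (First price deviation lemma) In a simultaneous first price auction, fix a set S ⊆ [m] and a bidder i with a fractionally subadditive valuation v_i, budget B_i ≥ 0, and v_i(S) > 0, and let a_r be an additive valuation from i's XOS family that is maximizing for S (v_i(S) = Σ_{j∈S} a_r({j})). For δ > 0 and a fixed profile b_{-i} of the other bidders' bids, define the deviation b*_i by b*_{ij} = min{ a_r({j}) · min{v_i(S), B_i} / v_i(S), max_{k≠i} b_{kj} + δ } for j ∈ S and b*_{ij} = 0 for j ∉ S. Then u_i(b*_i, b_{-i}) ≥ min{v_i(S), B_i} − Σ_{j∈S} max_{k≠i} b_{kj} − δ·|S|. -/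
/-!
First price deviation lemma: in a simultaneous first price auction, a bidder `i`
with an XOS valuation, deviating to bids that slightly overbid the competition
(capped by `a_r(j) · min{v_i(S), B_i} / v_i(S)`) on the items of a set `S`,
derives utility at least `min{v_i(S), B_i} − Σ_{j∈S} max_{k≠i} b_{kj} − δ|S|`.
-/

open Finset

/-- The highest competing bid `max_{k ≠ i} b_{kj}` (bids are nonnegative). -/
noncomputable def maxOther {n m : ℕ} (b : Fin n → Fin m → ℝ) (i : Fin n) (j : Fin m) : ℝ :=
  Finset.fold max 0 (fun k => b k j) (univ.erase i)

/-!
On an item of `S` that the deviator wins she pays at most `p j + δ`, where `p j` bounds the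
competing bids; on one that she loses, her bid did not exceed `p j`, so it was her cap `c j` and
`c j ≤ p j`. Either way her gain on the item, measured by an additive function `a ≥ c` that lies
below her valuation, is at least `c j - p j - δ`. Choosing for `c` the multiple of `a` that sums to
`min (v i S) (B i)` over `S` gives the bound.
-/

/-- If `a j < 0`, then dropping `j` from `S` would raise the value. -/
theorem nonneg_of_monotone_of_le_sum {ι R : Type*} [AddCommGroup R] [PartialOrder R]
    [IsOrderedAddMonoid R] {v : Finset ι → R} (hv : Monotone v) {a : ι → R} {S : Finset ι}
    (ha_dom : ∀ T ⊆ S, ∑ j ∈ T, a j ≤ v T) (ha_max : v S ≤ ∑ j ∈ S, a j) {j : ι} (hj : j ∈ S) :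
    0 ≤ a j := by
  classical
  have h : ∑ l ∈ S.erase j, a l ≤ ∑ l ∈ S.erase j, a l + a j :=
    calc ∑ l ∈ S.erase j, a l ≤ v (S.erase j) := ha_dom _ (erase_subset j S)
      _ ≤ v S := hv (erase_subset j S)
      _ ≤ ∑ l ∈ S, a l := ha_max
      _ = ∑ l ∈ S.erase j, a l + a j := (sum_erase_add S a hj).symm
  exact (le_add_iff_nonneg_right _).mp h

theorem le_maxOther {n m : ℕ} (b : Fin n → Fin m → ℝ) {i k : Fin n} (hk : k ≠ i) (j : Fin m) :
    b k j ≤ maxOther b i j :=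
  (le_fold_max _).mpr <| .inr ⟨k, mem_erase.mpr ⟨hk, mem_univ k⟩, le_rfl⟩

/-- The bids of the deviation: overbid the prices `p` by `δ` on the items of `S`, but never bid more
than the cap `c`; bid `0` on all other items. -/
noncomputable def cappedOverbid {ι : Type*} [DecidableEq ι] (S : Finset ι) (c p : ι → ℝ) (δ : ℝ)
    (j : ι) : ℝ :=
  if j ∈ S then min (c j) (p j + δ) else 0

namespace ItemAuctionFP

variable {n m : ℕ} (A : ItemAuctionFP n m) {i : Fin n} {S : Finset (Fin m)} {a c p : Fin m → ℝ}
  {δ : ℝ} {b : Fin n → Fin m → ℝ}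

theorem mem_won_update_of_forall_lt {d : Fin m → ℝ} {j : Fin m} (hd : ∀ k ≠ i, b k j < d j) :
    j ∈ A.won i (Function.update b i d) := by
  refine mem_filter.mpr ⟨mem_univ j, A.win_strict _ j i fun k hk => ?_⟩
  rw [Function.update_of_ne hk, Function.update_self]
  exact hd k hk

theorem sum_inter_won_sub_le_util (ha_dom : ∀ T ⊆ S, ∑ j ∈ T, a j ≤ A.v i T)
    (hb : ∀ j ∉ S, b i j = 0) :
    ∑ j ∈ S ∩ A.won i b, (a j - b i j) ≤ A.util i b := by
  have hpay : ∑ j ∈ S ∩ A.won i b, b i j = A.pay i b :=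
    sum_subset inter_subset_right fun j hj hjS =>
      hb j fun h => hjS (mem_inter.mpr ⟨h, hj⟩)
  have hval : ∑ j ∈ S ∩ A.won i b, a j ≤ A.v i (A.won i b) :=
    (ha_dom _ inter_subset_left).trans (A.v_mono i _ _ inter_subset_right)
  rw [sum_sub_distrib, hpay]
  exact sub_le_sub_right hval _

theorem cap_le_of_notMem_won (hδ : 0 < δ) {j : Fin m} (hp : ∀ k ≠ i, b k j ≤ p j) (hj : j ∈ S)
    (hlost : j ∉ A.won i (Function.update b i (cappedOverbid S c p δ))) : c j ≤ p j := by
  have hbid : cappedOverbid S c p δ j ≤ p j := not_lt.mp fun h =>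
    hlost (A.mem_won_update_of_forall_lt fun k hk => (hp k hk).trans_lt h)
  rw [cappedOverbid, if_pos hj] at hbid
  exact (min_le_iff.mp hbid).resolve_right (lt_add_of_pos_right _ hδ).not_ge

theorem sum_cap_sub_le_util_update_cappedOverbid (ha_dom : ∀ T ⊆ S, ∑ j ∈ T, a j ≤ A.v i T)
    (hca : ∀ j ∈ S, c j ≤ a j) (hδ : 0 < δ) (hp : ∀ j ∈ S, ∀ k ≠ i, b k j ≤ p j) :
    ∑ j ∈ S, (c j - (p j + δ)) ≤ A.util i (Function.update b i (cappedOverbid S c p δ)) := by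
  set d := cappedOverbid S c p δ with hd
  set W := A.won i (Function.update b i d)
  have hwon : ∀ j ∈ S ∩ W, c j - (p j + δ) ≤ a j - Function.update b i d i j := by
    intro j hj
    have hjS : j ∈ S := mem_of_mem_inter_left hj
    rw [Function.update_self, hd, cappedOverbid, if_pos hjS]
    exact sub_le_sub (hca j hjS) (min_le_right _ _)
  have hlost : ∀ j ∈ S \ W, c j - (p j + δ) ≤ 0 := by
    intro j hj
    obtain ⟨hjS, hjW⟩ := mem_sdiff.mp hj
    linarith [A.cap_le_of_notMem_won hδ (hp j hjS) hjS hjW]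
  calc ∑ j ∈ S, (c j - (p j + δ))
      = ∑ j ∈ S ∩ W, (c j - (p j + δ)) + ∑ j ∈ S \ W, (c j - (p j + δ)) :=
        (sum_inter_add_sum_sdiff S W _).symm
    _ ≤ ∑ j ∈ S ∩ W, (a j - Function.update b i d i j) + 0 :=
        add_le_add (sum_le_sum hwon) (sum_nonpos hlost)
    _ ≤ A.util i (Function.update b i d) := by
        rw [add_zero]
        refine A.sum_inter_won_sub_le_util ha_dom fun j hj => ?_
        rw [Function.update_self, hd, cappedOverbid, if_neg hj]

end ItemAuctionFP

/-- `M` plays the role of `min (v i S) (B i)`, and `p` that of the highest competing bids. -/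
theorem first_price_deviation_lemma_general {n m : ℕ} (A : ItemAuctionFP n m)
    {i : Fin n} {S : Finset (Fin m)} {a : Fin m → ℝ}
    (ha_dom : ∀ T ⊆ S, ∑ j ∈ T, a j ≤ A.v i T)
    (ha_max : A.v i S = ∑ j ∈ S, a j) (hvS : 0 < A.v i S)
    {M : ℝ} (hM : M ≤ A.v i S) {δ : ℝ} (hδ : 0 < δ)
    {b : Fin n → Fin m → ℝ} {p : Fin m → ℝ} (hp : ∀ j ∈ S, ∀ k ≠ i, b k j ≤ p j) :
    M - ∑ j ∈ S, p j - δ * S.card ≤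
      A.util i (Function.update b i (cappedOverbid S (fun j => a j * M / A.v i S) p δ)) := by
  have hcap_le : ∀ j ∈ S, a j * M / A.v i S ≤ a j := fun j hj => by
    have ha_nonneg : 0 ≤ a j := nonneg_of_monotone_of_le_sum (A.v_mono i) ha_dom ha_max.le hj
    exact (div_le_iff₀ hvS).mpr (mul_le_mul_of_nonneg_left hM ha_nonneg)
  have hcap_sum : ∑ j ∈ S, a j * M / A.v i S = M := by
    rw [← sum_div, ← sum_mul, ← ha_max, mul_div_cancel_left₀ M hvS.ne']
  calc M - ∑ j ∈ S, p j - δ * S.card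
      = ∑ j ∈ S, (a j * M / A.v i S - (p j + δ)) := by
        rw [sum_sub_distrib, hcap_sum, sum_add_distrib, sum_const, nsmul_eq_mul]
        ring
    _ ≤ _ := A.sum_cap_sub_le_util_update_cappedOverbid ha_dom hcap_le hδ hp

/-- **First price deviation lemma.**  `a` is an additive valuation from bidder
`i`'s XOS family (`∀ T, Σ_{j∈T} a j ≤ v_i(T)`) maximizing for `S`
(`v_i(S) = Σ_{j∈S} a j`).  Deviating to
`b*_{ij} = min{a j · min{v_i(S), B_i}/v_i(S), max_{k≠i} b_{kj} + δ}` on `j ∈ S`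
(and `0` elsewhere) guarantees
`u_i(b*, b_{-i}) ≥ min{v_i(S), B_i} − Σ_{j∈S} max_{k≠i} b_{kj} − δ·|S|`. -/
theorem first_price_deviation_lemma {n m : ℕ} (A : ItemAuctionFP n m)
    (i : Fin n) (S : Finset (Fin m))
    (a : Fin m → ℝ) (ha_nonneg : ∀ j, 0 ≤ a j)
    (ha_dom : ∀ T : Finset (Fin m), ∑ j ∈ T, a j ≤ A.v i T)
    (ha_max : A.v i S = ∑ j ∈ S, a j)
    (hvS : 0 < A.v i S)
    (δ : ℝ) (hδ : 0 < δ)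
    (b : Fin n → Fin m → ℝ) (hb_nonneg : ∀ k j, 0 ≤ b k j)
    (bstar : Fin m → ℝ)
    (hbstar : ∀ j, bstar j =
      if j ∈ S then
        min (a j * min (A.v i S) (A.B i) / A.v i S) (maxOther b i j + δ)
      else 0) :
    A.util i (Function.update b i bstar) ≥
      min (A.v i S) (A.B i) - (∑ j ∈ S, maxOther b i j) - δ * S.card := by
  obtain rfl : bstar = cappedOverbid S _ (maxOther b i) δ := funext hbstar
  exact first_price_deviation_lemma_general A (fun T _ => ha_dom T) ha_max hvS (min_le_left _ _) hδ
    fun j _ _ hk => le_maxOther b hk j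
end

section
/- For every integer n ≥ 2, consider the simultaneous first price auction with n bidders and n indivisible items in which every bidder i has additive values v_{i1} = n^4, v_{ij} = 1 for 2 ≤ j ≤ n, and budget B_i = 1, where ties among highest bids on item 1 are broken uniformly at random and an item on which all bids are zero remains unallocated. Then the pure bid profile b in which every bidder bids 1 on item 1 and 0 on every other item is a Nash equilibrium (no bidder can increase her expected utility, over the tie-breaking randomness, by any deviation whose bids sum to at most her budget), its expected Liquid Welfare is LW(b) = 1, and the optimal Liquid Welfare is OPT = n; hence the Liquid Price of Anarchy is at least n. -/
/-!
With a randomized tie-breaking rule, simultaneous first price auctions have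
Liquid Price of Anarchy `Ω(n)` even for pure strategies: with `n` bidders and
`n` items, all values `n⁴` for item 1 and `1` for the other items, and unit
budgets, the profile where everybody bids her full budget on item 1 is a pure
Nash equilibrium with expected Liquid Welfare `1`, whereas `OPT = n`.
-/

open Finset

/-- A (possibly randomized) allocation rule for a simultaneous first price
auction: `q c` is a finitely supported probability distribution over partial
allocations `a : Fin m → Option (Fin n)`.  Any supported allocation awards each
item with a positive bid to a bidder with the highest bid on it and leaves items
with all-zero bids unallocated. -/
structure RandRule (n m : ℕ) where
  q : (Fin n → Fin m → ℝ) → (Fin m → Option (Fin n)) → ℝ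
  q_nonneg : ∀ c a, 0 ≤ q c a
  q_sum : ∀ c, ∑ a : Fin m → Option (Fin n), q c a = 1
  supp_max : ∀ c a, q c a ≠ 0 → ∀ (j : Fin m) (i : Fin n), a j = some i →
    ∀ k, c k j ≤ c i j
  supp_pos : ∀ c a, q c a ≠ 0 → ∀ j : Fin m, (∃ i, 0 < c i j) → (a j).isSome
  supp_zero : ∀ c a, q c a ≠ 0 → ∀ j : Fin m, (∀ i, c i j = 0) → a j = none

/-- Expected utility of bidder `i` under bid profile `c` (first price:
a winner pays her own bid), over the tie-breaking randomness. -/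
noncomputable def EU {n m : ℕ} (R : RandRule n m) (v : Fin n → Fin m → ℝ)
    (i : Fin n) (c : Fin n → Fin m → ℝ) : ℝ :=
  ∑ a : Fin m → Option (Fin n), R.q c a *
    ∑ j : Fin m, if a j = some i then v i j - c i j else 0

/-- Expected Liquid Welfare of bid profile `c` over the tie-breaking randomness. -/
noncomputable def LWr {n m : ℕ} (R : RandRule n m) (v : Fin n → Fin m → ℝ)
    (B : Fin n → ℝ) (c : Fin n → Fin m → ℝ) : ℝ :=
  ∑ i : Fin n, ∑ a : Fin m → Option (Fin n),
    R.q c a * min (∑ j : Fin m, if a j = some i then v i j else 0) (B i)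

/-- The set of bidders with a positive highest bid on item `j0`. -/
noncomputable def tieSet {n m : ℕ} (c : Fin n → Fin m → ℝ) (j0 : Fin m) : Finset (Fin n) :=
  univ.filter fun i => 0 < c i j0 ∧ ∀ k, c k j0 ≤ c i j0

/-!
Expected utility is linear in the probabilities of winning the single items. When every bidder
stakes her whole budget on item `j0`, a deviation that lowers the bid on `j0` loses that item for
sure, because some rival still bids the whole budget on it. It therefore earns at most the value of
the other items, which is less than the profit on `j0` times the probability `1 / n` of winning it.
In this equilibrium only `j0` is sold, so the liquid welfare is a single budget, although giving
every bidder an item of her own would exhaust all `n` budgets.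
-/

section Definitions

variable {n m : ℕ}

/-- The probability that bidder `i` wins item `j` under the bid profile `c`; expected utilities are
linear in these numbers. -/
def RandRule.winProb (R : RandRule n m) (c : Fin n → Fin m → ℝ) (i : Fin n) (j : Fin m) : ℝ :=
  ∑ a with a j = some i, R.q c a

/-- Pure Nash equilibrium for expected utilities: no bidder gains by switching to a nonnegative bid
vector within her budget. The feasibility of `b` itself is not included. -/
def IsPureNash (R : RandRule n m) (v : Fin n → Fin m → ℝ) (B : Fin n → ℝ)
    (b : Fin n → Fin m → ℝ) : Prop :=
  ∀ (i : Fin n) (c' : Fin m → ℝ), (∀ j, 0 ≤ c' j) → ∑ j, c' j ≤ B i →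
    EU R v i (Function.update b i c') ≤ EU R v i b

/-- The liquid welfare of a deterministic allocation of all items. A partition of the items into
bundles is encoded by the map `alloc` sending each item to its owner. -/
def liquidWelfare (v : Fin n → Fin m → ℝ) (B : Fin n → ℝ) (alloc : Fin m → Fin n) : ℝ :=
  ∑ i, min (∑ j with alloc j = i, v i j) (B i)

/-- The bid profile in which every bidder bids `β` on item `j0` and nothing on the other items;
for budgets `β` it is the equilibrium of the lower bound. -/
def allInProfile (β : ℝ) (j0 : Fin m) : Fin n → Fin m → ℝ :=
  fun _ => Pi.single j0 β

end Definitions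

theorem eq_pi_single_of_sum_le {ι M : Type*} [Fintype ι] [DecidableEq ι] [AddCommGroup M]
    [PartialOrder M] [IsOrderedAddMonoid M] {f : ι → M} (hf : ∀ j, 0 ≤ f j) {j0 : ι}
    (hsum : ∑ j, f j ≤ f j0) : f = Pi.single j0 (f j0) := by
  have hrest : ∑ j ∈ univ.erase j0, f j = 0 := by
    refine le_antisymm ?_ (sum_nonneg fun j _ => hf j)
    rwa [← add_sum_erase univ f (mem_univ j0), add_le_iff_nonpos_right] at hsum
  ext j
  obtain rfl | hj := eq_or_ne j j0
  · rw [Pi.single_eq_same]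
  · rw [Pi.single_eq_of_ne hj]
    exact (sum_eq_zero_iff_of_nonneg fun j _ => hf j).mp hrest j (by simp [hj])

theorem sub_one_le_pow_four_sub_one_mul_one_div {x : ℝ} (hx : 1 ≤ x) :
    x - 1 ≤ (x ^ 4 - 1) * (1 / x) := by
  rw [mul_one_div, le_div_iff₀ (by linarith)]
  nlinarith [pow_le_pow_right₀ hx (show 2 ≤ 4 by norm_num)]

namespace RandRule

variable {n m : ℕ} (R : RandRule n m) {c : Fin n → Fin m → ℝ} {i : Fin n} {j j0 : Fin m}

theorem winProb_nonneg : 0 ≤ R.winProb c i j :=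
  sum_nonneg fun a _ => R.q_nonneg c a

theorem winProb_le_one : R.winProb c i j ≤ 1 :=
  (sum_le_univ_sum_of_nonneg (R.q_nonneg c)).trans_eq (R.q_sum c)

theorem winProb_eq_zero_of_lt {k : Fin n} (h : c i j < c k j) : R.winProb c i j = 0 := by
  refine sum_eq_zero fun a ha => ?_
  by_contra hq
  exact (R.supp_max c a hq j i (mem_filter.mp ha).2 k).not_gt h

theorem winProb_eq_zero_of_forall_eq_zero (h : ∀ k, c k j = 0) : R.winProb c i j = 0 := by
  refine sum_eq_zero fun a ha => ?_
  by_contra hq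
  simpa [(mem_filter.mp ha).2] using R.supp_zero c a hq j h

theorem sum_winProb_eq_one (h : ∃ i, 0 < c i j) : ∑ i, R.winProb c i j = 1 := by
  simp only [winProb, sum_filter]
  rw [sum_comm, ← R.q_sum c]
  refine sum_congr rfl fun a _ => ?_
  by_cases hq : R.q c a = 0
  · simp [hq]
  · obtain ⟨k, hk⟩ := Option.isSome_iff_exists.mp (R.supp_pos c a hq j h)
    simp [hk]

theorem EU_eq_sum_winProb (v : Fin n → Fin m → ℝ) :
    EU R v i c = ∑ j, (v i j - c i j) * R.winProb c i j := by
  simp only [EU, winProb, mul_sum, sum_filter]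
  rw [sum_comm]
  refine sum_congr rfl fun j _ => sum_congr rfl fun a _ => ?_
  split_ifs <;> ring

theorem EU_le_sum_erase_of_lt {v : Fin n → Fin m → ℝ} {k : Fin n} (hv : ∀ j, 0 ≤ v i j)
    (hc : ∀ j, 0 ≤ c i j) (hlt : c i j0 < c k j0) :
    EU R v i c ≤ ∑ j ∈ univ.erase j0, v i j := by
  rw [R.EU_eq_sum_winProb, ← add_sum_erase _ _ (mem_univ j0), R.winProb_eq_zero_of_lt hlt,
    mul_zero, zero_add]
  refine sum_le_sum fun j _ => ?_
  calc (v i j - c i j) * R.winProb c i j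
      ≤ v i j * R.winProb c i j :=
        mul_le_mul_of_nonneg_right (sub_le_self _ (hc j)) R.winProb_nonneg
    _ ≤ v i j := mul_le_of_le_one_right (hv j) R.winProb_le_one

theorem EU_eq_of_forall_ne_eq_zero (v : Fin n → Fin m → ℝ)
    (hc : ∀ i j, j ≠ j0 → c i j = 0) :
    EU R v i c = (v i j0 - c i j0) * R.winProb c i j0 := by
  rw [R.EU_eq_sum_winProb]
  refine Fintype.sum_eq_single j0 fun j hj => ?_
  rw [R.winProb_eq_zero_of_forall_eq_zero fun i => hc i j hj, mul_zero]

theorem LWr_eq_sum_budget_mul_winProb {v : Fin n → Fin m → ℝ} {B : Fin n → ℝ}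
    (hB : ∀ i, 0 ≤ B i) (hBv : ∀ i, B i ≤ v i j0) (hc : ∀ i j, j ≠ j0 → c i j = 0) :
    LWr R v B c = ∑ i, B i * R.winProb c i j0 := by
  simp only [LWr, winProb, mul_sum, sum_filter]
  refine sum_congr rfl fun i _ => sum_congr rfl fun a _ => ?_
  by_cases hq : R.q c a = 0
  · simp [hq]
  have hbundle : (∑ j, if a j = some i then v i j else 0) =
      if a j0 = some i then v i j0 else 0 :=
    Fintype.sum_eq_single j0 fun j hj => by
      simp [R.supp_zero c a hq j fun i => hc i j hj]
  rw [hbundle]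
  split_ifs
  · rw [min_eq_right (hBv i), mul_comm]
  · rw [min_eq_left (hB i), mul_zero, mul_zero]

end RandRule

section AllInProfile

variable {n m : ℕ} {β : ℝ} {j0 : Fin m}

theorem allInProfile_apply_same (i : Fin n) : allInProfile β j0 i j0 = β :=
  Pi.single_eq_same (M := fun _ => ℝ) j0 β

theorem allInProfile_apply_of_ne (i : Fin n) (j : Fin m) (hj : j ≠ j0) :
    allInProfile β j0 i j = 0 :=
  Pi.single_eq_of_ne (M := fun _ => ℝ) hj β

theorem tieSet_allInProfile (hβ : 0 < β) :
    tieSet (allInProfile (n := n) β j0) j0 = univ := by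
  simp [tieSet, allInProfile_apply_same, hβ]

theorem isPureNash_allInProfile (hn : 2 ≤ n) (R : RandRule n m) {v : Fin n → Fin m → ℝ}
    (hv : ∀ i j, 0 ≤ v i j)
    (hrest : ∀ i, ∑ j ∈ univ.erase j0, v i j ≤
      (v i j0 - β) * R.winProb (allInProfile β j0) i j0) :
    IsPureNash R v (fun _ => β) (allInProfile β j0) := by
  intro i c' hc' hsum
  have hle : c' j0 ≤ β := (single_le_sum (fun j _ => hc' j) (mem_univ j0)).trans hsum
  obtain rfl | hlt := hle.eq_or_lt
  · have hkeep : Function.update (allInProfile (c' j0) j0) i c' = allInProfile (c' j0) j0 :=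
      Function.update_eq_self_iff.mpr (eq_pi_single_of_sum_le hc' hsum)
    rw [hkeep]
  · have : Nontrivial (Fin n) := Fin.nontrivial_iff_two_le.mpr hn
    obtain ⟨k, hk⟩ := exists_ne i
    calc EU R v i (Function.update (allInProfile β j0) i c')
        ≤ ∑ j ∈ univ.erase j0, v i j :=
          R.EU_le_sum_erase_of_lt (k := k) (hv i) (by simpa using hc')
            (by simpa [hk, allInProfile_apply_same] using hlt)
      _ ≤ (v i j0 - β) * R.winProb (allInProfile β j0) i j0 := hrest i
      _ = EU R v i (allInProfile β j0) := by
          rw [R.EU_eq_of_forall_ne_eq_zero v allInProfile_apply_of_ne, allInProfile_apply_same]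

theorem LWr_allInProfile [NeZero n] (hβ : 0 < β) (R : RandRule n m) {v : Fin n → Fin m → ℝ}
    (hv : ∀ i, β ≤ v i j0) :
    LWr R v (fun _ => β) (allInProfile β j0) = β := by
  rw [R.LWr_eq_sum_budget_mul_winProb (fun _ => hβ.le) hv allInProfile_apply_of_ne, ← mul_sum,
    R.sum_winProb_eq_one ⟨0, by rwa [allInProfile_apply_same]⟩, mul_one]

end AllInProfile

section LiquidWelfare

variable {n m : ℕ} {v : Fin n → Fin m → ℝ} {B : Fin n → ℝ}

theorem liquidWelfare_le_sum_budget (alloc : Fin m → Fin n) :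
    liquidWelfare v B alloc ≤ ∑ i, B i :=
  sum_le_sum fun _ _ => min_le_right _ _

theorem liquidWelfare_eq_sum_budget {alloc : Fin m → Fin n}
    (h : ∀ i, B i ≤ ∑ j with alloc j = i, v i j) : liquidWelfare v B alloc = ∑ i, B i :=
  sum_congr rfl fun i _ => min_eq_right (h i)

theorem isGreatest_liquidWelfare [NeZero n] (hnm : n ≤ m) (hv : ∀ i j, 0 ≤ v i j)
    (hBv : ∀ i j, B i ≤ v i j) :
    IsGreatest (Set.range (liquidWelfare v B)) (∑ i, B i) := by
  obtain ⟨alloc, halloc⟩ : ∃ alloc : Fin m → Fin n, Function.Surjective alloc :=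
    ⟨_, Function.invFun_surjective (Fin.castLE_injective hnm)⟩
  refine ⟨⟨alloc, liquidWelfare_eq_sum_budget fun i => ?_⟩,
    Set.forall_mem_range.mpr liquidWelfare_le_sum_budget⟩
  obtain ⟨j, hj⟩ := halloc i
  exact (hBv i j).trans (single_le_sum (fun j _ => hv i j) (by simp [hj]))

end LiquidWelfare

theorem randomized_tiebreak_lpoa_linear_general {n m : ℕ} (hn : 2 ≤ n) (hnm : n ≤ m) (j0 : Fin m)
    {β : ℝ} (hβ : 0 < β) {v : Fin n → Fin m → ℝ} (hv : ∀ i j, β ≤ v i j) (R : RandRule n m)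
    (hrest : ∀ i, ∑ j ∈ univ.erase j0, v i j ≤
      (v i j0 - β) * R.winProb (allInProfile β j0) i j0) :
    IsPureNash R v (fun _ => β) (allInProfile β j0) ∧
    LWr R v (fun _ => β) (allInProfile β j0) = β ∧
    IsGreatest (Set.range (liquidWelfare v fun _ => β)) (n * β) := by
  have : NeZero n := ⟨by lia⟩
  have hv0 i j : 0 ≤ v i j := hβ.le.trans (hv i j)
  refine ⟨isPureNash_allInProfile hn R hv0 hrest, LWr_allInProfile hβ R fun i => hv i j0, ?_⟩
  simpa using isGreatest_liquidWelfare (B := fun _ => β) hnm hv0 hv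

/-- **Randomized tie-breaking lower bound.**  For `n ≥ 2` bidders and `n` items,
values `v i j = n⁴` for `j = j0` (item 1) and `1` otherwise, budgets `B i = 1`,
and any first price allocation rule that breaks ties on item `j0` uniformly at
random among the highest (positive) bidders: the profile `b` where everyone bids
`1` on `j0` and `0` elsewhere is a pure Nash equilibrium, its expected Liquid
Welfare equals `1`, and the optimal Liquid Welfare equals `n`; hence the Liquid
Price of Anarchy is at least `n`. -/
theorem randomized_tiebreak_lpoa_linear (n : ℕ) (hn : 2 ≤ n)
    (j0 : Fin n) (hj0 : (j0 : ℕ) = 0)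
    (v : Fin n → Fin n → ℝ) (hv : ∀ i j, v i j = if j = j0 then (n : ℝ) ^ 4 else 1)
    (B : Fin n → ℝ) (hB : ∀ i, B i = 1)
    (b : Fin n → Fin n → ℝ) (hb : ∀ i j, b i j = if j = j0 then 1 else 0)
    (R : RandRule n n)
    (hunif : ∀ c : Fin n → Fin n → ℝ, ∀ i ∈ tieSet c j0,
      ∑ a ∈ univ.filter (fun a : Fin n → Option (Fin n) => a j0 = some i), R.q c a =
        1 / ((tieSet c j0).card : ℝ)) :
    (∀ i (c' : Fin n → ℝ), (∀ j, 0 ≤ c' j) → (∑ j : Fin n, c' j) ≤ B i →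
        EU R v i (Function.update b i c') ≤ EU R v i b) ∧
    LWr R v B b = 1 ∧
    (∃ alloc : Fin n → Fin n,
      ∑ i, min (∑ j ∈ univ.filter (fun j => alloc j = i), v i j) (B i) = n) ∧
    (∀ alloc : Fin n → Fin n,
      ∑ i, min (∑ j ∈ univ.filter (fun j => alloc j = i), v i j) (B i) ≤ n) := by
  obtain rfl : b = allInProfile 1 j0 := by ext i j; simp [hb, allInProfile, Pi.single_apply]
  obtain rfl : B = fun _ => 1 := funext hB
  have hn1 : (1 : ℝ) ≤ n := by exact_mod_cast one_le_two.trans hn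
  have hv1 i j : 1 ≤ v i j := by
    rw [hv]
    split_ifs
    exacts [one_le_pow₀ hn1, le_rfl]
  have hwin i : R.winProb (allInProfile 1 j0) i j0 = 1 / n := by
    simpa [RandRule.winProb, tieSet_allInProfile] using
      hunif (allInProfile 1 j0) i (by simp [tieSet_allInProfile])
  have hothers i : ∑ j ∈ univ.erase j0, v i j = n - 1 := by
    rw [sum_congr rfl fun j hj => (hv i j).trans (if_neg (ne_of_mem_erase hj))]
    simp [Nat.cast_pred j0.pos]
  have hrest i : ∑ j ∈ univ.erase j0, v i j ≤
      (v i j0 - 1) * R.winProb (allInProfile 1 j0) i j0 := by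
    rw [hothers, hwin, hv, if_pos rfl]
    exact sub_one_le_pow_four_sub_one_mul_one_div hn1
  obtain ⟨hNash, hLW, hOPT⟩ :=
    randomized_tiebreak_lpoa_linear_general hn le_rfl j0 one_pos hv1 R hrest
  rw [mul_one] at hOPT
  exact ⟨hNash, hLW, hOPT.1, fun alloc => hOPT.2 ⟨alloc, rfl⟩⟩
end

section
/- Consider a Bayesian share-model simultaneous second price auction with n additive budgeted bidders whose types are drawn independently from finite-support distributions, and in which every item has h ≥ n identical shares. Under the no over-bidding and no over-budgeting assumptions, for every Bayesian Nash equilibrium s, OPT ≤ 51.5 · LW(s). -/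
/-!
Bayesian share-model simultaneous second price auctions with additive budgeted
bidders whose types come from independent finite-support distributions: if every
item has `h ≥ n` identical shares, then under the no over-bidding and no
over-budgeting assumptions, for every Bayesian Nash equilibrium `s`,
`OPT ≤ 51.5 · LW(s)`.
-/

open Finset

/-- A Bayesian share-model simultaneous first price auction: bidder `i` has
`t i` possible types, drawn with probabilities `π i`; a type consists of
additive values `v i τ j ≥ 0` (a share of item `j` is worth `v i τ j / h`)
and a budget `B i τ ≥ 0`.  Every share is awarded by the deterministic rule
`win` to a bidder with the highest bid on it, and the winner of a share pays the
highest competing bid on it. -/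
structure BayesAuction (n m h : ℕ) where
  t : Fin n → ℕ
  π : ∀ i, Fin (t i) → ℝ
  π_nonneg : ∀ i τ, 0 ≤ π i τ
  π_sum : ∀ i, ∑ τ, π i τ = 1
  v : ∀ i, Fin (t i) → Fin m → ℝ
  v_nonneg : ∀ i τ j, 0 ≤ v i τ j
  B : ∀ i, Fin (t i) → ℝ
  B_nonneg : ∀ i τ, 0 ≤ B i τ
  win : (Fin n → Fin m → Fin h → ℝ) → Fin m → Fin h → Fin n
  win_max : ∀ (b : Fin n → Fin m → Fin h → ℝ) (j : Fin m) (ℓ : Fin h) (i : Fin n),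
    b i j ℓ ≤ b (win b j ℓ) j ℓ

/-- A (behavioral) strategy profile: bidder `i` of type `τ` plays the
(nonnegative) bid vector `β i τ k` with probability `p i τ k`. -/
structure BayesStrategy (n m h : ℕ) (t : Fin n → ℕ) where
  K : ∀ i, Fin (t i) → ℕ
  p : ∀ i (τ : Fin (t i)), Fin (K i τ) → ℝ
  p_nonneg : ∀ i τ k, 0 ≤ p i τ k
  p_sum : ∀ i τ, ∑ k, p i τ k = 1
  β : ∀ i (τ : Fin (t i)), Fin (K i τ) → Fin m → Fin h → ℝ
  β_nonneg : ∀ i τ k j ℓ, 0 ≤ β i τ k j ℓ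

namespace Bayes

variable {n m h : ℕ}

/-- Joint probability of the sample point `ω` (a realized type and bid index for
every bidder, independently across bidders). -/
noncomputable def prob (A : BayesAuction n m h) (s : BayesStrategy n m h A.t)
    (ω : ∀ i, Σ τ : Fin (A.t i), Fin (s.K i τ)) : ℝ :=
  ∏ i, A.π i (ω i).1 * s.p i (ω i).1 (ω i).2

/-- The pure bid profile realized at sample point `ω`. -/
def bids (A : BayesAuction n m h) (s : BayesStrategy n m h A.t)
    (ω : ∀ i, Σ τ : Fin (A.t i), Fin (s.K i τ)) : Fin n → Fin m → Fin h → ℝ :=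
  fun i => s.β i (ω i).1 (ω i).2

/-- Value bidder `i` of type `τ` derives from the shares she wins under `b`. -/
noncomputable def val (A : BayesAuction n m h) (i : Fin n) (τ : Fin (A.t i))
    (b : Fin n → Fin m → Fin h → ℝ) : ℝ :=
  ∑ j : Fin m, ∑ ℓ : Fin h, if A.win b j ℓ = i then A.v i τ j / h else 0

/-- The highest competing bid `max_{k ≠ i} b_{kjℓ}` (bids are nonnegative). -/
noncomputable def maxOther (b : Fin n → Fin m → Fin h → ℝ) (i : Fin n)
    (j : Fin m) (ℓ : Fin h) : ℝ :=
  Finset.fold max 0 (fun k => b k j ℓ) (univ.erase i)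

/-- Second-price payment of bidder `i`: the highest competing bid on each share won. -/
noncomputable def pay (A : BayesAuction n m h) (i : Fin n)
    (b : Fin n → Fin m → Fin h → ℝ) : ℝ :=
  ∑ j : Fin m, ∑ ℓ : Fin h, if A.win b j ℓ = i then maxOther b i j ℓ else 0

/-- Quasilinear utility of bidder `i` of type `τ`. -/
noncomputable def util (A : BayesAuction n m h) (i : Fin n) (τ : Fin (A.t i))
    (b : Fin n → Fin m → Fin h → ℝ) : ℝ :=
  val A i τ b - pay A i b

/-- No over-bidding: the bid of a type-`τ` bidder `i` on each share of item `j`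
is at most `v i τ j / h`. -/
def NoOverbid (A : BayesAuction n m h) (i : Fin n) (τ : Fin (A.t i))
    (bi : Fin m → Fin h → ℝ) : Prop :=
  ∀ (j : Fin m) (ℓ : Fin h), bi j ℓ ≤ A.v i τ j / h

/-- No over-budgeting: bids sum to at most the budget. -/
def NoOverbudget (A : BayesAuction n m h) (i : Fin n) (τ : Fin (A.t i))
    (bi : Fin m → Fin h → ℝ) : Prop :=
  (∑ j : Fin m, ∑ ℓ : Fin h, bi j ℓ) ≤ A.B i τ

/-- `s` is a Bayesian Nash equilibrium within the class of no over-bidding and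
no over-budgeting strategies: for every bidder `i`, every type `τ`, and every
deterministic nonnegative deviation `b'` satisfying no over-bidding and no
over-budgeting, the interim expected utility of type `τ` under `s` is at least
that of the deviation (both sides written multiplied by the probability
`π i τ` of the type). -/
def IsBNE (A : BayesAuction n m h) (s : BayesStrategy n m h A.t) : Prop :=
  ∀ i (τ : Fin (A.t i)) (b' : Fin m → Fin h → ℝ), (∀ j ℓ, 0 ≤ b' j ℓ) →
    NoOverbid A i τ b' → NoOverbudget A i τ b' →
    (∑ ω : ∀ i, Σ τ : Fin (A.t i), Fin (s.K i τ),
        prob A s ω * (if (ω i).1 = τ then util A i τ (bids A s ω) else 0)) ≥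
      ∑ ω : ∀ i, Σ τ : Fin (A.t i), Fin (s.K i τ),
        prob A s ω *
          (if (ω i).1 = τ then util A i τ (Function.update (bids A s ω) i b') else 0)

/-- Expected Liquid Welfare of the strategy profile `s`. -/
noncomputable def LW (A : BayesAuction n m h) (s : BayesStrategy n m h A.t) : ℝ :=
  ∑ i, ∑ ω : ∀ i, Σ τ : Fin (A.t i), Fin (s.K i τ),
    prob A s ω * min (val A i (ω i).1 (bids A s ω)) (A.B i (ω i).1)

end Bayes

/-!
A bidder of a given type may deviate to bidding slightly more than twice the expected top bid, or
her value if that is lower, on every share of a bundle `S` of her choice. By a Markov-type estimate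
each of these bids gains at least half the value of the share minus its expected top bid. So in
equilibrium her expected value is at least half the value of `S` minus the expected top bids on `S`,
provided her budget allows the deviation. If it does not, the expected top bids on `S` are at least
half her budget, hence at least half her benchmark welfare.

From each item the bundle takes the cheapest shares, as many as the benchmark gives her in
expectation plus twice what she wins in equilibrium; the second part compensates for the value she
already holds. Summed over bidders and types the bundles cover every item at most `3 + n / h` times,
where `n / h` comes from rounding up to whole shares. As nobody over-bids or over-budgets, the top
bids add up to at most the liquid welfare, which gives the factor `2 * (3 + n / h) + 2`.
-/

section ProductDistribution

variable {ι R : Type*} [Fintype ι] [DecidableEq ι] {α : ι → Type*} [∀ i, Fintype (α i)]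
  [CommSemiring R] (g : ∀ i, α i → R)

theorem sum_prod_mul_of_dependsOn_compl {i : ι} (hg : ∑ a, g i a = 1) (c : α i → R)
    {F : (∀ i, α i) → R} (hF : DependsOn F {i}ᶜ) :
    ∑ ω, (∏ k, g k (ω k)) * (c (ω i) * F ω) =
      (∑ a, g i a * c a) * ∑ ω, (∏ k, g k (ω k)) * F ω := by
  rcases isEmpty_or_nonempty (α i) with hα | ⟨⟨a₀⟩⟩
  · have : IsEmpty (∀ k, α k) := ⟨fun ω => hα.elim (ω i)⟩
    simp
  let join (a : α i) (r : ∀ k : {k // k ≠ i}, α k) : ∀ k, α k := (Equiv.piSplitAt i α).symm (a, r)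
  have join_self (a r) : join a r i = a := by simp [join]
  have prod_join (a r) : ∏ k, g k (join a r k) = g i a * ∏ k : {k // k ≠ i}, g k (r k) := by
    rw [Fintype.prod_eq_mul_prod_subtype_ne _ i, join_self]
    congr! with k
    simp [join, k.2]
  have apply_join (a r) : F (join a r) = F (join a₀ r) := hF fun k hk => by
    simp [join, Set.mem_compl_singleton_iff.1 hk]
  have factor (c : α i → R) : ∑ ω, (∏ k, g k (ω k)) * (c (ω i) * F ω) =
      (∑ a, g i a * c a) * ∑ r, (∏ k : {k // k ≠ i}, g k (r k)) * F (join a₀ r) := by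
    calc ∑ ω, (∏ k, g k (ω k)) * (c (ω i) * F ω)
        = ∑ a, ∑ r, (∏ k, g k (join a r k)) * (c (join a r i) * F (join a r)) := by
          rw [← (Equiv.piSplitAt i α).symm.sum_comp, Fintype.sum_prod_type]
      _ = _ := by
          simp only [prod_join, join_self, apply_join, sum_mul_sum]
          exact sum_congr rfl fun a _ => sum_congr rfl fun r _ => by ring
  simpa [hg, factor c] using congrArg ((∑ a, g i a * c a) * ·) (factor 1).symm

theorem sum_prod_mul_comp {β : ι → Type*} [∀ i, Fintype (β i)] [∀ i, DecidableEq (β i)]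
    (f : ∀ i, α i → β i) (F : (∀ i, β i) → R) :
    ∑ ω : ∀ i, α i, (∏ i, g i (ω i)) * F (fun i => f i (ω i)) =
      ∑ θ : ∀ i, β i, (∏ i, ∑ a with f i a = θ i, g i a) * F θ := by
  rw [← sum_fiberwise univ fun ω i => f i (ω i)]
  refine sum_congr rfl fun θ _ => ?_
  have fiber : Fintype.piFinset (fun i => {a | f i a = θ i}) =
      ({ω | (fun i => f i (ω i)) = θ} : Finset (∀ i, α i)) := by
    ext ω
    simp [funext_iff]
  rw [prod_univ_sum, fiber, sum_mul]
  refine sum_congr rfl fun ω hω => ?_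
  rw [(mem_filter.1 hω).2]

end ProductDistribution

section CheapBundle

theorem exists_subset_card_mul_sum_le {ι : Type*} (f : ι → ℝ) (T : Finset ι) {k : ℕ}
    (hk : k ≤ #T) : ∃ S ⊆ T, #S = k ∧ #T * ∑ x ∈ S, f x ≤ k * ∑ x ∈ T, f x := by
  classical
  obtain ⟨d, hd⟩ := Nat.exists_eq_add_of_le hk
  clear hk
  induction d generalizing T with
  | zero => exact ⟨T, Subset.rfl, hd, by rw [hd, add_zero]⟩
  | succ d ih =>
    obtain ⟨x, hx, hmax⟩ := T.exists_max_image f (card_pos.1 (by omega))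
    have card_erase : #(T.erase x) = k + d := by rw [card_erase_of_mem hx]; omega
    obtain ⟨S, hST, hS, hle⟩ := ih _ card_erase
    have sum_le : ∑ y ∈ S, f y ≤ k * f x := by
      rw [← hS, ← nsmul_eq_mul]
      exact sum_le_card_nsmul _ _ _ fun y hy => hmax y (mem_of_mem_erase (hST hy))
    refine ⟨S, hST.trans (erase_subset _ _), hS, ?_⟩
    rw [card_erase] at hle
    rw [hd, ← add_sum_erase T f hx]
    push_cast at hle ⊢
    linarith

theorem exists_cheap_subset {κ : Type*} [Fintype κ] [Nonempty κ] {f : κ → ℝ} (hf : ∀ x, 0 ≤ f x)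
    {r : ℝ} (hr₀ : 0 ≤ r) (hr₁ : r ≤ 1) :
    ∃ S : Finset κ, r * Fintype.card κ ≤ #S ∧
      ∑ x ∈ S, f x ≤ (r + 1 / Fintype.card κ) * ∑ x, f x := by
  have hN : (0 : ℝ) < Fintype.card κ := by exact_mod_cast Fintype.card_pos
  have hceil : ⌈r * Fintype.card κ⌉₊ ≤ #(univ : Finset κ) :=
    Nat.ceil_le.2 (mul_le_of_le_one_left hN.le hr₁)
  obtain ⟨S, -, hS, hle⟩ := exists_subset_card_mul_sum_le f univ hceil
  refine ⟨S, hS ▸ Nat.le_ceil _, le_of_mul_le_mul_left ?_ hN⟩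
  calc (Fintype.card κ : ℝ) * ∑ x ∈ S, f x
      ≤ ⌈r * Fintype.card κ⌉₊ * ∑ x, f x := hle
    _ ≤ (r * Fintype.card κ + 1) * ∑ x, f x := by
        gcongr
        · exact sum_nonneg fun x _ => hf x
        · exact (Nat.ceil_lt_add_one (by positivity)).le
    _ = Fintype.card κ * ((r + 1 / Fintype.card κ) * ∑ x, f x) := by field_simp

theorem exists_cheap_bundle {ι κ : Type*} [Fintype ι] [Fintype κ] [Nonempty κ] {q : ι → κ → ℝ}
    (hq : ∀ j ℓ, 0 ≤ q j ℓ) {w : ℝ} {z : ι → ℝ} (hz₀ : ∀ j, 0 ≤ z j) (hzw : ∀ j, z j ≤ w) :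
    ∃ S : ι → Finset κ, (∀ j, z j * Fintype.card κ ≤ w * #(S j)) ∧
      w * ∑ j, ∑ ℓ ∈ S j, q j ℓ ≤ ∑ j, (∑ ℓ, q j ℓ) * (z j + w / Fintype.card κ) := by
  have hw (j) : 0 ≤ w := (hz₀ j).trans (hzw j)
  choose S hcard hsum using fun j =>
    exists_cheap_subset (hq j) (div_nonneg (hz₀ j) (hw j)) (div_le_one_of_le₀ (hzw j) (hw j))
  have mul_div (j) : w * (z j / w) = z j :=
    mul_div_cancel_of_imp' fun h => le_antisymm (h ▸ hzw j) (hz₀ j)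
  refine ⟨S, fun j => ?_, ?_⟩
  · calc z j * Fintype.card κ = w * (z j / w * Fintype.card κ) := by rw [← mul_assoc, mul_div]
      _ ≤ w * #(S j) := mul_le_mul_of_nonneg_left (hcard j) (hw j)
  · rw [mul_sum]
    refine sum_le_sum fun j _ => ?_
    calc w * ∑ ℓ ∈ S j, q j ℓ
        ≤ w * ((z j / w + 1 / Fintype.card κ) * ∑ ℓ, q j ℓ) :=
          mul_le_mul_of_nonneg_left (hsum j) (hw j)
      _ = (∑ ℓ, q j ℓ) * (w * (z j / w) + w / Fintype.card κ) := by ring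
      _ = _ := by rw [mul_div]

theorem sum_mul_div_two_sub_le_mul_sum_sub {ι κ : Type*} [Fintype ι] [Fintype κ] [Nonempty κ]
    {v z : ι → ℝ} (hv : ∀ j, 0 ≤ v j) {w : ℝ} {S : ι → Finset κ}
    (hS : ∀ j, z j * Fintype.card κ ≤ w * #(S j)) (q : ι → κ → ℝ) :
    (∑ j, v j * z j) / 2 - w * ∑ j, ∑ ℓ ∈ S j, q j ℓ ≤
      w * ∑ j, ∑ ℓ ∈ S j, (v j / Fintype.card κ / 2 - q j ℓ) := by
  simp only [sum_sub_distrib, sum_const, nsmul_eq_mul]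
  rw [mul_sub]
  refine sub_le_sub_right ?_ _
  rw [sum_div, mul_sum]
  refine sum_le_sum fun j _ => ?_
  calc v j * z j / 2 = v j / Fintype.card κ / 2 * (z j * Fintype.card κ) := by field_simp
    _ ≤ v j / Fintype.card κ / 2 * (w * #(S j)) :=
      mul_le_mul_of_nonneg_left (hS j) (by have := hv j; positivity)
    _ = w * (#(S j) * (v j / Fintype.card κ / 2)) := by ring

end CheapBundle

section Deviation

theorem exists_lt_sum_le {ι : Type*} {S : Finset ι} {f : ι → ℝ} {B : ℝ}
    (hB : ∑ x ∈ S, f x < B) : ∃ c : ι → ℝ, (∀ x, f x < c x) ∧ ∑ x ∈ S, c x ≤ B := by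
  obtain ⟨δ, hδ, hlt⟩ := exists_pos_mul_lt (sub_pos.2 hB) #S
  refine ⟨fun x => f x + δ, fun x => lt_add_of_pos_right _ hδ, ?_⟩
  rw [sum_add_distrib, sum_const, nsmul_eq_mul]
  linarith

/-- Here `p` is the highest competing bid and `u` the utility of a bidder with value `V` who bids
`min c V`. -/
theorem sub_max_one_div_mul_le {V c p u : ℝ} (hc : 0 < c) (hp : 0 ≤ p) (hu₀ : 0 ≤ u)
    (hu : p < min c V → V - p ≤ u) : V - max 1 (V / c) * p ≤ u := by
  rcases lt_or_ge p (min c V) with hlt | hge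
  · linarith [hu hlt, le_mul_of_one_le_left hp (le_max_left 1 (V / c))]
  · suffices V ≤ max 1 (V / c) * p by linarith
    rcases min_le_iff.1 hge with hcp | hVp
    · calc V = V / c * c := (div_mul_cancel₀ V hc.ne').symm
        _ ≤ max 1 (V / c) * p := by gcongr; exact le_max_right _ _
    · exact hVp.trans (le_mul_of_one_le_left hp (le_max_left _ _))

theorem sum_mul_half_sub_le {Ω : Type*} [Fintype Ω] {μ p u : Ω → ℝ} {V c q : ℝ}
    (hμ : ∀ ω, 0 ≤ μ ω) (hV : 0 ≤ V) (hq : 0 ≤ q) (hqc : 2 * q < c) (hp : ∀ ω, 0 ≤ p ω)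
    (hu₀ : ∀ ω, 0 ≤ u ω) (hu : ∀ ω, p ω < min c V → V - p ω ≤ u ω)
    (hpq : ∑ ω, μ ω * p ω ≤ (∑ ω, μ ω) * q) :
    (∑ ω, μ ω) * (V / 2 - q) ≤ ∑ ω, μ ω * u ω := by
  have hc : 0 < c := by linarith
  set κ := max 1 (V / c)
  have markov : κ * q ≤ V / 2 + q := by
    rw [max_mul_of_nonneg _ _ hq]
    refine max_le (by linarith) ?_
    calc V / c * q ≤ V / c * (c / 2) := by gcongr; linarith
      _ = V / 2 := by field_simp
      _ ≤ V / 2 + q := by linarith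
  calc (∑ ω, μ ω) * (V / 2 - q)
      ≤ (∑ ω, μ ω) * (V - κ * q) :=
        mul_le_mul_of_nonneg_left (by linarith) (sum_nonneg fun ω _ => hμ ω)
    _ = (∑ ω, μ ω) * V - κ * ((∑ ω, μ ω) * q) := by ring
    _ ≤ (∑ ω, μ ω) * V - κ * ∑ ω, μ ω * p ω := by gcongr
    _ = ∑ ω, μ ω * (V - κ * p ω) := by
        rw [sum_mul, mul_sum, ← sum_sub_distrib]
        exact sum_congr rfl fun ω _ => by ring
    _ ≤ ∑ ω, μ ω * u ω := by
        gcongr with ω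
        · exact hμ ω
        · exact sub_max_one_div_mul_le hc (hp ω) (hu₀ ω) (hu ω)

end Deviation

section BudgetTruncation

variable {Ω ι : Type*} [Fintype Ω] [Fintype ι] {μ : Ω → ℝ} {x : Ω → ι → ℝ} {v : ι → ℝ} {B : ℝ}

theorem mul_sum_mul_sum_le_sum_mul_min (hμ : ∀ ω, 0 ≤ μ ω) (hx₀ : ∀ ω j, 0 ≤ x ω j)
    (hx₁ : ∀ ω j, x ω j ≤ 1) (hv : ∀ j, 0 ≤ v j) (E : Finset ι) {lam : ℝ} (hlam₀ : 0 ≤ lam)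
    (hlam₁ : lam ≤ 1) (hB : lam * ∑ j ∈ E, v j ≤ B) :
    lam * ∑ j ∈ E, v j * ∑ ω, μ ω * x ω j ≤ ∑ ω, μ ω * min (∑ j, v j * x ω j) B := by
  have hvx (ω j) : 0 ≤ v j * x ω j := mul_nonneg (hv j) (hx₀ ω j)
  calc lam * ∑ j ∈ E, v j * ∑ ω, μ ω * x ω j
      = ∑ ω, μ ω * (lam * ∑ j ∈ E, v j * x ω j) := by
        simp only [mul_sum]
        rw [sum_comm]
        exact sum_congr rfl fun ω _ => sum_congr rfl fun j _ => by ring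
    _ ≤ ∑ ω, μ ω * min (∑ j, v j * x ω j) B := by
        gcongr with ω
        · exact hμ ω
        refine le_min ?_ (le_trans ?_ hB)
        · calc lam * ∑ j ∈ E, v j * x ω j ≤ ∑ j ∈ E, v j * x ω j :=
                mul_le_of_le_one_left (sum_nonneg fun j _ => hvx ω j) hlam₁
            _ ≤ ∑ j, v j * x ω j :=
                sum_le_sum_of_subset_of_nonneg (subset_univ E) fun j _ _ => hvx ω j
        · gcongr with j
          exact mul_le_of_le_one_right (hv j) (hx₁ ω j)

theorem sum_mul_ite_le_of_div_two_sub_le {X P : ι → ℝ} {w Q : ℝ}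
    (h : (∑ j, v j * min w (X j + 2 * P j)) / 2 - Q ≤ ∑ j, v j * P j) :
    ∑ j, v j * (if w < X j + 2 * P j then w else X j) ≤
      2 * (Q + ∑ j with w < X j + 2 * P j, v j * P j) := by
  have termwise (j) : v j * (if w < X j + 2 * P j then w else X j) =
      v j * min w (X j + 2 * P j) - 2 * (v j * P j) +
        2 * if w < X j + 2 * P j then v j * P j else 0 := by
    split_ifs with hj
    · rw [min_eq_left hj.le]
      ring
    · rw [min_eq_right (not_lt.1 hj)]
      ring
  simp only [termwise, sum_add_distrib, sum_sub_distrib, ← mul_sum, ← sum_filter]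
  linarith

theorem exists_scaling_le {B V w O Y : ℝ} (hB : 0 ≤ B) (hOY : O ≤ Y) (hOB : O ≤ w * B)
    (hVY : w * V ≤ Y) : ∃ lam : ℝ, 0 ≤ lam ∧ lam ≤ 1 ∧ lam * V ≤ B ∧ O ≤ lam * Y := by
  rcases le_or_gt V B with hVB | hBV
  · exact ⟨1, zero_le_one, le_rfl, by rwa [one_mul], by rwa [one_mul]⟩
  · have hV : 0 < V := hB.trans_lt hBV
    refine ⟨B / V, by positivity, (div_le_one hV).2 hBV.le, (div_mul_cancel₀ B hV.ne').le, ?_⟩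
    calc O ≤ w * B := hOB
      _ = B / V * (w * V) := by field_simp
      _ ≤ B / V * Y := by gcongr

/-- `X j` and `∑ ω, μ ω * x ω j` are the expected amounts of item `j` in the benchmark `O` and in
equilibrium, `w` is the total mass of `μ`, and `hdev` is the equilibrium condition against a
deviation of cost `Q`. On the items `j` with `w < X j + 2 * ∑ ω, μ ω * x ω j` the bundle of the
deviation is the whole item; scaling these items down to the budget is harmless because the
benchmark is bounded by the budget as well. -/
theorem le_two_mul_add_two_mul_sum_mul_min {X : ι → ℝ} {w O Q : ℝ} (hμ : ∀ ω, 0 ≤ μ ω)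
    (hx₀ : ∀ ω j, 0 ≤ x ω j) (hx₁ : ∀ ω j, x ω j ≤ 1) (hv : ∀ j, 0 ≤ v j) (hB : 0 ≤ B)
    (hX₀ : ∀ j, 0 ≤ X j) (hXw : ∀ j, X j ≤ w) (hQ : 0 ≤ Q)
    (hdev : (∑ j, v j * min w (X j + 2 * ∑ ω, μ ω * x ω j)) / 2 - Q ≤
      ∑ j, v j * ∑ ω, μ ω * x ω j)
    (hO_value : O ≤ ∑ j, v j * X j) (hO_budget : O ≤ w * B) :
    O ≤ 2 * Q + 2 * ∑ ω, μ ω * min (∑ j, v j * x ω j) B := by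
  set P : ι → ℝ := fun j => ∑ ω, μ ω * x ω j
  set E : Finset ι := {j | w < X j + 2 * P j}
  set Y := ∑ j, v j * if w < X j + 2 * P j then w else X j
  have value_le_Y : ∑ j, v j * X j ≤ Y := by
    refine sum_le_sum fun j _ => mul_le_mul_of_nonneg_left ?_ (hv j)
    split_ifs
    exacts [hXw j, le_rfl]
  have saturated_le_Y : w * ∑ j ∈ E, v j ≤ Y := by
    rw [sum_filter, mul_sum]
    refine sum_le_sum fun j _ => ?_
    split_ifs
    · exact (mul_comm _ _).le
    · simpa using mul_nonneg (hv j) (hX₀ j)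
  obtain ⟨lam, hlam₀, hlam₁, hlamB, hO⟩ :=
    exists_scaling_le hB (hO_value.trans value_le_Y) hO_budget saturated_le_Y
  calc O ≤ lam * Y := hO
    _ ≤ lam * (2 * (Q + ∑ j ∈ E, v j * P j)) := by
      gcongr
      exact sum_mul_ite_le_of_div_two_sub_le hdev
    _ = 2 * (lam * Q) + 2 * (lam * ∑ j ∈ E, v j * P j) := by ring
    _ ≤ _ := by
      gcongr
      · exact mul_le_of_le_one_left hQ hlam₁
      · exact mul_sum_mul_sum_le_sum_mul_min hμ hx₀ hx₁ hv E hlam₀ hlam₁ hlamB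

end BudgetTruncation

namespace Bayes

variable {n m h : ℕ}

section Fraction

/-- The fraction of an item that bidder `i` receives when share `ℓ` goes to `a ℓ`. -/
noncomputable def fraction (a : Fin h → Fin n) (i : Fin n) : ℝ :=
  #{ℓ | a ℓ = i} / h

theorem fraction_nonneg (a : Fin h → Fin n) (i : Fin n) : 0 ≤ fraction a i := by
  unfold fraction
  positivity

theorem fraction_le_one (a : Fin h → Fin n) (i : Fin n) : fraction a i ≤ 1 := by
  refine div_le_one_of_le₀ ?_ h.cast_nonneg
  exact_mod_cast (card_le_univ _).trans_eq (Fintype.card_fin h)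

theorem sum_fraction (hh : 0 < h) (a : Fin h → Fin n) : ∑ i, fraction a i = 1 := by
  have hcard := card_eq_sum_card_fiberwise (f := a) (s := univ) (t := univ) (by simp)
  rw [card_univ, Fintype.card_fin] at hcard
  simp only [fraction, ← sum_div]
  rw [← Nat.cast_sum, ← hcard, div_self (Nat.cast_ne_zero.2 hh.ne')]

theorem sum_sum_ite_div_eq_sum_mul_fraction (a : Fin m → Fin h → Fin n) (i : Fin n)
    (v : Fin m → ℝ) :
    (∑ j, ∑ ℓ, if a j ℓ = i then v j / h else 0) = ∑ j, v j * fraction (a j) i := by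
  refine sum_congr rfl fun j _ => ?_
  rw [← sum_filter, sum_const, nsmul_eq_mul, fraction]
  ring

theorem val_eq_sum_mul_fraction (A : BayesAuction n m h) (i : Fin n) (τ : Fin (A.t i))
    (b : Fin n → Fin m → Fin h → ℝ) :
    val A i τ b = ∑ j, A.v i τ j * fraction (A.win b j) i :=
  sum_sum_ite_div_eq_sum_mul_fraction _ _ _

end Fraction

section ShareUtility

variable (A : BayesAuction n m h) {b b' : Fin n → Fin m → Fin h → ℝ} {i : Fin n} {j : Fin m}
  {ℓ : Fin h} {V : ℝ}

theorem maxOther_le_iff {c : ℝ} : maxOther b i j ℓ ≤ c ↔ 0 ≤ c ∧ ∀ k ≠ i, b k j ℓ ≤ c := by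
  simp [maxOther, fold_max_le]

theorem maxOther_nonneg : 0 ≤ maxOther b i j ℓ :=
  (maxOther_le_iff.1 le_rfl).1

theorem le_maxOther {k : Fin n} (hk : k ≠ i) : b k j ℓ ≤ maxOther b i j ℓ :=
  (maxOther_le_iff.1 le_rfl).2 k hk

theorem maxOther_congr (hb : ∀ k ≠ i, b k = b' k) : maxOther b i j ℓ = maxOther b' i j ℓ :=
  fold_congr fun k hk => by rw [hb k (ne_of_mem_erase hk)]

theorem win_eq_of_maxOther_lt (hlt : maxOther b i j ℓ < b i j ℓ) : A.win b j ℓ = i := by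
  by_contra hne
  exact (hlt.trans_le ((A.win_max b j ℓ i).trans (le_maxOther hne))).false

/-- The utility a bidder `i` with value `V` for share `ℓ` of item `j` derives from that share. -/
noncomputable def shareUtil (i : Fin n) (V : ℝ) (b : Fin n → Fin m → Fin h → ℝ) (j : Fin m)
    (ℓ : Fin h) : ℝ :=
  if A.win b j ℓ = i then V - maxOther b i j ℓ else 0

theorem util_eq_sum_shareUtil (i : Fin n) (τ : Fin (A.t i)) (b : Fin n → Fin m → Fin h → ℝ) :
    util A i τ b = ∑ j, ∑ ℓ, shareUtil A i (A.v i τ j / h) b j ℓ := by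
  simp only [util, val, pay, ← sum_sub_distrib, shareUtil]
  refine sum_congr rfl fun j _ => sum_congr rfl fun ℓ _ => ?_
  split_ifs <;> simp

theorem shareUtil_nonneg (hb : 0 ≤ b i j ℓ) (hV : b i j ℓ ≤ V) : 0 ≤ shareUtil A i V b j ℓ := by
  unfold shareUtil
  split_ifs with hwin
  · exact sub_nonneg.2 ((maxOther_le_iff.2 ⟨hb, fun k _ => hwin ▸ A.win_max b j ℓ k⟩).trans hV)
  · exact le_rfl

theorem shareUtil_of_maxOther_lt (hlt : maxOther b i j ℓ < b i j ℓ) :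
    shareUtil A i V b j ℓ = V - maxOther b i j ℓ :=
  if_pos (win_eq_of_maxOther_lt A hlt)

theorem util_le_val (i : Fin n) (τ : Fin (A.t i)) (b : Fin n → Fin m → Fin h → ℝ) :
    util A i τ b ≤ val A i τ b := by
  refine sub_le_self _ (sum_nonneg fun j _ => sum_nonneg fun ℓ _ => ?_)
  split_ifs
  exacts [maxOther_nonneg, le_rfl]

end ShareUtility

section Probability

variable (A : BayesAuction n m h) (s : BayesStrategy n m h A.t)

/-- The sample space of the auction: a realized type and bid index for every bidder. -/
abbrev Outcome : Type :=
  ∀ i, Σ τ : Fin (A.t i), Fin (s.K i τ)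

/-- The joint law of the type and the bid index of bidder `i`. -/
noncomputable def bidderProb (i : Fin n) (a : Σ τ : Fin (A.t i), Fin (s.K i τ)) : ℝ :=
  A.π i a.1 * s.p i a.1 a.2

/-- The probability of `ω` restricted to the event that bidder `i` has type `τ`. Summing against it
gives the interim expectation for type `τ` multiplied by the probability of `τ`; the lack of
normalization keeps types of probability zero harmless. -/
noncomputable def interimProb (i : Fin n) (τ : Fin (A.t i)) (ω : Outcome A s) : ℝ :=
  if (ω i).1 = τ then prob A s ω else 0

variable {A s}

theorem prob_nonneg (ω : Outcome A s) : 0 ≤ prob A s ω :=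
  prod_nonneg fun _ _ => mul_nonneg (A.π_nonneg _ _) (s.p_nonneg _ _ _)

theorem interimProb_nonneg (i : Fin n) (τ : Fin (A.t i)) (ω : Outcome A s) :
    0 ≤ interimProb A s i τ ω := by
  unfold interimProb
  split_ifs
  exacts [prob_nonneg ω, le_rfl]

variable (A s)

theorem sum_bidderProb_type_eq (i : Fin n) (τ : Fin (A.t i)) :
    ∑ a with a.1 = τ, bidderProb A s i a = A.π i τ := by
  simp [sum_filter, Fintype.sum_sigma, bidderProb, ← mul_sum, s.p_sum]

theorem sum_bidderProb (i : Fin n) : ∑ a, bidderProb A s i a = 1 := by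
  rw [← sum_fiberwise univ Sigma.fst]
  simp only [sum_bidderProb_type_eq, A.π_sum]

theorem sum_prob : ∑ ω, prob A s ω = 1 := by
  calc ∑ ω, prob A s ω = ∏ i, ∑ a, bidderProb A s i a :=
        (Fintype.prod_sum (bidderProb A s)).symm
    _ = 1 := by simp [sum_bidderProb]

theorem sum_prob_mul_types (F : (∀ i, Fin (A.t i)) → ℝ) :
    ∑ ω, prob A s ω * F (fun i => (ω i).1) = ∑ θ, (∏ i, A.π i (θ i)) * F θ := by
  refine (sum_prod_mul_comp (bidderProb A s) (fun _ => Sigma.fst) F).trans ?_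
  simp only [sum_bidderProb_type_eq]

theorem sum_sum_interimProb_mul (i : Fin n) (F : Fin (A.t i) → Outcome A s → ℝ) :
    ∑ τ, ∑ ω, interimProb A s i τ ω * F τ ω = ∑ ω, prob A s ω * F (ω i).1 ω := by
  rw [sum_comm]
  simp [interimProb]

theorem sum_interimProb_mul_of_dependsOn_compl (i : Fin n) (τ : Fin (A.t i))
    {F : Outcome A s → ℝ} (hF : DependsOn F {i}ᶜ) :
    ∑ ω, interimProb A s i τ ω * F ω = A.π i τ * ∑ ω, prob A s ω * F ω := by
  have := sum_prod_mul_of_dependsOn_compl (bidderProb A s) (sum_bidderProb A s i)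
    (fun a => if a.1 = τ then 1 else 0) hF
  simp only [mul_ite, mul_one, mul_zero, ← sum_filter, sum_bidderProb_type_eq] at this
  rw [← show _ = A.π i τ * ∑ ω, prob A s ω * F ω from this]
  simp [interimProb, prob, bidderProb]

theorem sum_interimProb (i : Fin n) (τ : Fin (A.t i)) :
    ∑ ω, interimProb A s i τ ω = A.π i τ := by
  simpa [sum_prob] using
    sum_interimProb_mul_of_dependsOn_compl A s i τ ((dependsOn_const (1 : ℝ)).mono (by simp))

end Probability

section TopBid

variable (A : BayesAuction n m h) (s : BayesStrategy n m h A.t)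

/-- The expected highest bid on share `ℓ` of item `j`. -/
noncomputable def expectedTopBid (j : Fin m) (ℓ : Fin h) : ℝ :=
  ∑ ω, prob A s ω * bids A s ω (A.win (bids A s ω) j ℓ) j ℓ

theorem expectedTopBid_nonneg (j : Fin m) (ℓ : Fin h) : 0 ≤ expectedTopBid A s j ℓ :=
  sum_nonneg fun ω _ => mul_nonneg (prob_nonneg ω) (s.β_nonneg _ _ _ _ _)

theorem sum_interimProb_mul_maxOther_le (i : Fin n) (τ : Fin (A.t i)) (j : Fin m) (ℓ : Fin h) :
    ∑ ω, interimProb A s i τ ω * maxOther (bids A s ω) i j ℓ ≤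
      A.π i τ * expectedTopBid A s j ℓ := by
  have hdep : DependsOn (fun ω : Outcome A s => maxOther (bids A s ω) i j ℓ) {i}ᶜ :=
    fun ω ω' hω => maxOther_congr fun k hk => by simp only [bids]; rw [hω k hk]
  rw [sum_interimProb_mul_of_dependsOn_compl A s i τ hdep]
  refine mul_le_mul_of_nonneg_left (sum_le_sum fun ω _ => ?_) (A.π_nonneg i τ)
  exact mul_le_mul_of_nonneg_left
    (maxOther_le_iff.2 ⟨s.β_nonneg _ _ _ _ _, fun k _ => A.win_max _ _ _ _⟩) (prob_nonneg ω)

variable {A s}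

theorem sum_winning_bids_le_min (hs_nob : ∀ i (τ : Fin (A.t i)) k, NoOverbid A i τ (s.β i τ k))
    (hs_nobud : ∀ i (τ : Fin (A.t i)) k, NoOverbudget A i τ (s.β i τ k))
    (ω : Outcome A s) (i : Fin n) :
    (∑ j, ∑ ℓ, if A.win (bids A s ω) j ℓ = i then bids A s ω i j ℓ else 0) ≤
      min (val A i (ω i).1 (bids A s ω)) (A.B i (ω i).1) := by
  refine le_min ?_ (le_trans ?_ (hs_nobud i (ω i).1 (ω i).2)) <;>
    refine sum_le_sum fun j _ => sum_le_sum fun ℓ _ => ?_ <;> split_ifs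
  exacts [hs_nob i _ _ j ℓ, le_rfl, le_rfl, s.β_nonneg _ _ _ _ _]

theorem sum_expectedTopBid_le_LW
    (hs_nob : ∀ i (τ : Fin (A.t i)) k, NoOverbid A i τ (s.β i τ k))
    (hs_nobud : ∀ i (τ : Fin (A.t i)) k, NoOverbudget A i τ (s.β i τ k)) :
    ∑ j, ∑ ℓ, expectedTopBid A s j ℓ ≤ LW A s := by
  have by_bidder (ω : Outcome A s) : ∑ j, ∑ ℓ, bids A s ω (A.win (bids A s ω) j ℓ) j ℓ =
      ∑ i, ∑ j, ∑ ℓ, if A.win (bids A s ω) j ℓ = i then bids A s ω i j ℓ else 0 := by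
    symm
    rw [sum_comm]
    refine sum_congr rfl fun j _ => ?_
    rw [sum_comm]
    simp
  calc ∑ j, ∑ ℓ, expectedTopBid A s j ℓ
      = ∑ ω, prob A s ω * ∑ j, ∑ ℓ, bids A s ω (A.win (bids A s ω) j ℓ) j ℓ := by
        simp only [expectedTopBid, mul_sum]
        symm
        rw [sum_comm]
        exact sum_congr rfl fun j _ => by rw [sum_comm]
    _ ≤ ∑ ω, prob A s ω * ∑ i, min (val A i (ω i).1 (bids A s ω)) (A.B i (ω i).1) := by
        gcongr with ω
        · exact prob_nonneg ω
        · rw [by_bidder]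
          exact sum_le_sum fun i _ => sum_winning_bids_le_min hs_nob hs_nobud ω i
    _ = LW A s := by
        simp only [LW, mul_sum]
        exact sum_comm

end TopBid

section InterimAllocation

variable (A : BayesAuction n m h) (s : BayesStrategy n m h A.t) (i : Fin n) (τ : Fin (A.t i))
  (a : Outcome A s → Fin m → Fin h → Fin n)

/-- The expected fraction of item `j` that bidder `i` receives under the random allocation `a`,
restricted to the event that her type is `τ`. -/
noncomputable def interimFraction (j : Fin m) : ℝ :=
  ∑ ω, interimProb A s i τ ω * fraction (a ω j) i

/-- The expected contribution of bidder `i` to the liquid welfare of the random allocation `a`,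
restricted to the event that her type is `τ`. -/
noncomputable def interimLiquidWelfare : ℝ :=
  ∑ ω, interimProb A s i τ ω * min (∑ j, A.v i τ j * fraction (a ω j) i) (A.B i τ)

/-- The allocation of the shares produced by the auction when the strategy profile is `s`. -/
def auctionAlloc (ω : Outcome A s) : Fin m → Fin h → Fin n :=
  A.win (bids A s ω)

theorem interimFraction_nonneg (j : Fin m) : 0 ≤ interimFraction A s i τ a j :=
  sum_nonneg fun ω _ => mul_nonneg (interimProb_nonneg i τ ω) (fraction_nonneg _ _)

theorem interimFraction_le (j : Fin m) : interimFraction A s i τ a j ≤ A.π i τ := by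
  rw [← sum_interimProb A s]
  exact sum_le_sum fun ω _ =>
    mul_le_of_le_one_right (interimProb_nonneg i τ ω) (fraction_le_one _ _)

theorem sum_interimFraction (hh : 0 < h) (j : Fin m) :
    ∑ i, ∑ τ, interimFraction A s i τ a j = 1 := by
  simp only [interimFraction]
  simp_rw [sum_sum_interimProb_mul A s _ fun _ ω => fraction (a ω j) _]
  rw [sum_comm]
  simp only [← mul_sum, sum_fraction hh, mul_one, sum_prob]

theorem sum_sum_mul_interimFraction_add (hh : 0 < h) (a' : Outcome A s → Fin m → Fin h → Fin n)
    (q : Fin m → ℝ) :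
    ∑ i, ∑ τ, ∑ j, q j * (interimFraction A s i τ a j + 2 * interimFraction A s i τ a' j +
        A.π i τ / h) = (3 + n / h) * ∑ j, q j := by
  have covered (j) : ∑ i, ∑ τ, (interimFraction A s i τ a j + 2 * interimFraction A s i τ a' j +
      A.π i τ / h) = 3 + n / h := by
    simp only [sum_add_distrib, ← mul_sum, sum_interimFraction A s _ hh, ← sum_div, A.π_sum]
    rw [sum_const, card_univ, Fintype.card_fin, nsmul_eq_mul]
    ring
  simp only [sum_comm (t := (univ : Finset (Fin m))), ← mul_sum, covered]
  rw [← sum_mul, mul_comm]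

theorem sum_mul_interimFraction (v : Fin m → ℝ) :
    ∑ j, v j * interimFraction A s i τ a j =
      ∑ ω, interimProb A s i τ ω * ∑ j, v j * fraction (a ω j) i := by
  simp only [interimFraction, mul_sum]
  rw [sum_comm]
  exact sum_congr rfl fun ω _ => sum_congr rfl fun j _ => mul_left_comm _ _ _

theorem interimLiquidWelfare_le_value :
    interimLiquidWelfare A s i τ a ≤ ∑ j, A.v i τ j * interimFraction A s i τ a j := by
  rw [sum_mul_interimFraction]
  exact sum_le_sum fun ω _ =>
    mul_le_mul_of_nonneg_left (min_le_left _ _) (interimProb_nonneg i τ ω)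

theorem interimLiquidWelfare_le_budget : interimLiquidWelfare A s i τ a ≤ A.π i τ * A.B i τ := by
  rw [← sum_interimProb A s, sum_mul]
  exact sum_le_sum fun ω _ =>
    mul_le_mul_of_nonneg_left (min_le_right _ _) (interimProb_nonneg i τ ω)

theorem interimLiquidWelfare_nonneg : 0 ≤ interimLiquidWelfare A s i τ a :=
  sum_nonneg fun ω _ => mul_nonneg (interimProb_nonneg i τ ω) <|
    le_min (sum_nonneg fun j _ => mul_nonneg (A.v_nonneg i τ j) (fraction_nonneg _ _))
      (A.B_nonneg i τ)

theorem LW_eq_sum_interimLiquidWelfare :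
    LW A s = ∑ i, ∑ τ, interimLiquidWelfare A s i τ (auctionAlloc A s) := by
  refine sum_congr rfl fun i _ => ?_
  simp only [val_eq_sum_mul_fraction]
  exact (sum_sum_interimProb_mul A s i fun τ ω =>
    min (∑ j, A.v i τ j * fraction (auctionAlloc A s ω j) i) (A.B i τ)).symm

theorem LW_nonneg : 0 ≤ LW A s := by
  rw [LW_eq_sum_interimLiquidWelfare]
  exact sum_nonneg fun i _ => sum_nonneg fun τ _ => interimLiquidWelfare_nonneg A s i τ _

theorem expected_liquidWelfare_eq_sum_interimLiquidWelfare
    (alloc : (∀ i, Fin (A.t i)) → Fin m → Fin h → Fin n) :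
    ∑ θ : ∀ i, Fin (A.t i), (∏ i, A.π i (θ i)) *
        ∑ i, min (∑ j : Fin m, ∑ ℓ : Fin h,
            if alloc θ j ℓ = i then A.v i (θ i) j / h else 0)
          (A.B i (θ i)) =
      ∑ i, ∑ τ, interimLiquidWelfare A s i τ fun ω => alloc fun k => (ω k).1 := by
  simp only [sum_sum_ite_div_eq_sum_mul_fraction]
  rw [← sum_prob_mul_types A s]
  simp only [mul_sum (ι := Fin n), interimLiquidWelfare]
  rw [sum_comm]
  exact sum_congr rfl fun i _ => (sum_sum_interimProb_mul A s i fun τ ω =>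
    min (∑ j, A.v i τ j * fraction (alloc (fun k => (ω k).1) j) i) (A.B i τ)).symm

end InterimAllocation

section Equilibrium

variable {A : BayesAuction n m h} {s : BayesStrategy n m h A.t}

theorem IsBNE.sum_interimProb_mul_util_update_le (hBNE : IsBNE A s) {i : Fin n} {τ : Fin (A.t i)}
    {b' : Fin m → Fin h → ℝ} (hb' : ∀ j ℓ, 0 ≤ b' j ℓ) (hnob : NoOverbid A i τ b')
    (hnobud : NoOverbudget A i τ b') :
    ∑ ω, interimProb A s i τ ω * util A i τ (Function.update (bids A s ω) i b') ≤
      ∑ j, A.v i τ j * interimFraction A s i τ (auctionAlloc A s) j := by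
  calc ∑ ω, interimProb A s i τ ω * util A i τ (Function.update (bids A s ω) i b')
      ≤ ∑ ω, interimProb A s i τ ω * util A i τ (bids A s ω) := by
        simpa [interimProb] using hBNE i τ b' hb' hnob hnobud
    _ ≤ ∑ ω, interimProb A s i τ ω * val A i τ (bids A s ω) := sum_le_sum fun ω _ =>
        mul_le_mul_of_nonneg_left (util_le_val A i τ _) (interimProb_nonneg i τ ω)
    _ = _ := by
        simp only [val_eq_sum_mul_fraction, sum_mul_interimFraction, auctionAlloc]

theorem mul_half_sub_expectedTopBid_le_sum_shareUtil {i : Fin n} (τ : Fin (A.t i))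
    {b' : Fin m → Fin h → ℝ} {j : Fin m} {ℓ : Fin h} {V c : ℝ} (hV : 0 ≤ V)
    (hc : 2 * expectedTopBid A s j ℓ < c) (hb' : b' j ℓ = min c V) :
    A.π i τ * (V / 2 - expectedTopBid A s j ℓ) ≤
      ∑ ω, interimProb A s i τ ω *
        shareUtil A i V (Function.update (bids A s ω) i b') j ℓ := by
  have hq := expectedTopBid_nonneg A s j ℓ
  have bid_eq (ω) : Function.update (bids A s ω) i b' i j ℓ = min c V := by simp [hb']
  have maxOther_update (ω) :
      maxOther (Function.update (bids A s ω) i b') i j ℓ = maxOther (bids A s ω) i j ℓ :=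
    maxOther_congr fun k hk => Function.update_of_ne hk _ _
  rw [← sum_interimProb A s]
  refine sum_mul_half_sub_le (p := fun ω => maxOther (bids A s ω) i j ℓ) (interimProb_nonneg i τ)
    hV hq hc (fun ω => maxOther_nonneg) (fun ω => ?_) (fun ω hlt => ?_) ?_
  · exact shareUtil_nonneg A (by rw [bid_eq]; exact le_min (by linarith) hV)
      (by rw [bid_eq]; exact min_le_right _ _)
  · rw [shareUtil_of_maxOther_lt A (by rwa [bid_eq, maxOther_update]), maxOther_update]
  · rw [sum_interimProb]
    exact sum_interimProb_mul_maxOther_le A s i τ j ℓ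

theorem exists_noOverbid_noOverbudget_bid (A : BayesAuction n m h) {i : Fin n} {τ : Fin (A.t i)}
    {q : Fin m → Fin h → ℝ} (hq : ∀ j ℓ, 0 ≤ q j ℓ) {S : Fin m → Finset (Fin h)}
    (hS : ∑ j, ∑ ℓ ∈ S j, q j ℓ < A.B i τ) :
    ∃ b' : Fin m → Fin h → ℝ, (∀ j ℓ, 0 ≤ b' j ℓ) ∧ NoOverbid A i τ b' ∧ NoOverbudget A i τ b' ∧
      ∀ j, ∀ ℓ ∈ S j, ∃ c, q j ℓ < c ∧ b' j ℓ = min c (A.v i τ j / h) := by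
  have hV (j) : 0 ≤ A.v i τ j / h := div_nonneg (A.v_nonneg i τ j) h.cast_nonneg
  rw [sum_sigma'] at hS
  obtain ⟨c, hqc, hcB⟩ := exists_lt_sum_le hS
  let b' (j : Fin m) (ℓ : Fin h) : ℝ := if ℓ ∈ S j then min (c ⟨j, ℓ⟩) (A.v i τ j / h) else 0
  refine ⟨b', fun j ℓ => ?_, fun j ℓ => ?_, ?_, fun j ℓ hℓ => ⟨c ⟨j, ℓ⟩, hqc ⟨j, ℓ⟩, if_pos hℓ⟩⟩
  · unfold b'
    split_ifs
    exacts [le_min ((hq j ℓ).trans (hqc ⟨j, ℓ⟩).le) (hV j), le_rfl]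
  · unfold b'
    split_ifs
    exacts [min_le_right _ _, hV j]
  · refine le_trans ?_ hcB
    rw [← sum_sigma' univ S fun j ℓ => c ⟨j, ℓ⟩]
    simp only [b', sum_ite_mem, univ_inter]
    exact sum_le_sum fun j _ => sum_le_sum fun ℓ _ => min_le_left _ _

theorem IsBNE.mul_sum_half_sub_expectedTopBid_le (hBNE : IsBNE A s) (i : Fin n)
    (τ : Fin (A.t i)) (S : Fin m → Finset (Fin h))
    (hS : 2 * ∑ j, ∑ ℓ ∈ S j, expectedTopBid A s j ℓ < A.B i τ) :
    A.π i τ * ∑ j, ∑ ℓ ∈ S j, (A.v i τ j / h / 2 - expectedTopBid A s j ℓ) ≤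
      ∑ j, A.v i τ j * interimFraction A s i τ (auctionAlloc A s) j := by
  have hV (j) : 0 ≤ A.v i τ j / h := div_nonneg (A.v_nonneg i τ j) h.cast_nonneg
  obtain ⟨b', hb', hnob, hnobud, hb'_eq⟩ := exists_noOverbid_noOverbudget_bid A
    (fun j ℓ => mul_nonneg zero_le_two (expectedTopBid_nonneg A s j ℓ))
    (by simpa only [mul_sum] using hS)
  refine le_trans ?_ (hBNE.sum_interimProb_mul_util_update_le hb' hnob hnobud)
  set b : Outcome A s → _ := fun ω => Function.update (bids A s ω) i b'
  calc A.π i τ * ∑ j, ∑ ℓ ∈ S j, (A.v i τ j / h / 2 - expectedTopBid A s j ℓ)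
      ≤ ∑ j, ∑ ℓ ∈ S j, ∑ ω, interimProb A s i τ ω *
          shareUtil A i (A.v i τ j / h) (b ω) j ℓ := by
        simp only [mul_sum _ _ (A.π i τ)]
        refine sum_le_sum fun j _ => sum_le_sum fun ℓ hℓ => ?_
        obtain ⟨c, hc, hbc⟩ := hb'_eq j ℓ hℓ
        exact mul_half_sub_expectedTopBid_le_sum_shareUtil τ (hV j) hc hbc
    _ ≤ ∑ j, ∑ ℓ, ∑ ω, interimProb A s i τ ω *
          shareUtil A i (A.v i τ j / h) (b ω) j ℓ := by
        refine sum_le_sum fun j _ => sum_le_sum_of_subset_of_nonneg (subset_univ _) fun ℓ _ _ =>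
          sum_nonneg fun ω _ => ?_
        exact mul_nonneg (interimProb_nonneg i τ ω)
          (shareUtil_nonneg A (by simpa [b] using hb' j ℓ) (by simpa [b] using hnob j ℓ))
    _ = ∑ ω, interimProb A s i τ ω * util A i τ (b ω) := by
        simp only [util_eq_sum_shareUtil, mul_sum]
        symm
        rw [sum_comm]
        exact sum_congr rfl fun j _ => sum_comm

theorem IsBNE.interimLiquidWelfare_le (hh : 0 < h) (hBNE : IsBNE A s) (i : Fin n)
    (τ : Fin (A.t i)) (a : Outcome A s → Fin m → Fin h → Fin n) :
    interimLiquidWelfare A s i τ a ≤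
      2 * (∑ j, (∑ ℓ, expectedTopBid A s j ℓ) * (interimFraction A s i τ a j +
        2 * interimFraction A s i τ (auctionAlloc A s) j + A.π i τ / h)) +
      2 * interimLiquidWelfare A s i τ (auctionAlloc A s) := by
  have : Nonempty (Fin h) := ⟨⟨0, hh⟩⟩
  have hw := A.π_nonneg i τ
  have hX := interimFraction_nonneg A s i τ a
  have hP := interimFraction_nonneg A s i τ (auctionAlloc A s)
  have hq := expectedTopBid_nonneg A s
  set z : Fin m → ℝ := fun j => min (A.π i τ)
    (interimFraction A s i τ a j + 2 * interimFraction A s i τ (auctionAlloc A s) j)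
  obtain ⟨S, hS_card, hS_cost⟩ := exists_cheap_bundle hq (w := A.π i τ) (z := z)
    (fun j => le_min hw (by linarith [hX j, hP j])) (fun j => min_le_left _ _)
  rw [Fintype.card_fin] at hS_cost
  set Q := A.π i τ * ∑ j, ∑ ℓ ∈ S j, expectedTopBid A s j ℓ
  have hQ₀ : 0 ≤ Q := mul_nonneg hw (sum_nonneg fun j _ => sum_nonneg fun ℓ _ => hq j ℓ)
  suffices interimLiquidWelfare A s i τ a ≤
      2 * Q + 2 * interimLiquidWelfare A s i τ (auctionAlloc A s) by
    refine this.trans ?_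
    gcongr
    refine hS_cost.trans (sum_le_sum fun j _ => ?_)
    gcongr
    · exact sum_nonneg fun ℓ _ => hq j ℓ
    · exact min_le_right _ _
  rcases le_or_gt (A.B i τ) (2 * ∑ j, ∑ ℓ ∈ S j, expectedTopBid A s j ℓ) with hB | hB
  · have := interimLiquidWelfare_nonneg A s i τ (auctionAlloc A s)
    linarith [interimLiquidWelfare_le_budget A s i τ a, mul_le_mul_of_nonneg_left hB hw]
  · have gain := sum_mul_div_two_sub_le_mul_sum_sub (A.v_nonneg i τ) hS_card (expectedTopBid A s)
    simp only [Fintype.card_fin] at gain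
    exact le_two_mul_add_two_mul_sum_mul_min (interimProb_nonneg i τ)
      (fun _ _ => fraction_nonneg _ _) (fun _ _ => fraction_le_one _ _) (A.v_nonneg i τ)
      (A.B_nonneg i τ) hX (interimFraction_le A s i τ a) hQ₀
      (gain.trans (hBNE.mul_sum_half_sub_expectedTopBid_le i τ S hB))
      (interimLiquidWelfare_le_value A s i τ a) (interimLiquidWelfare_le_budget A s i τ a)

end Equilibrium

end Bayes

theorem liquid_poa_bayesian_second_price_general {n m h : ℕ} (hh : 0 < h)
    (A : BayesAuction n m h) (s : BayesStrategy n m h A.t)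
    (hs_nob : ∀ i (τ : Fin (A.t i)) k, Bayes.NoOverbid A i τ (s.β i τ k))
    (hs_nobud : ∀ i (τ : Fin (A.t i)) k, Bayes.NoOverbudget A i τ (s.β i τ k))
    (hBNE : Bayes.IsBNE A s)
    (ALLOC : (∀ i, Fin (A.t i)) → Fin m → Fin h → Fin n) :
    ∑ θ : ∀ i, Fin (A.t i), (∏ i, A.π i (θ i)) *
        ∑ i, min (∑ j : Fin m, ∑ ℓ : Fin h,
            if ALLOC θ j ℓ = i then A.v i (θ i) j / h else 0)
          (A.B i (θ i))
      ≤ (8 + 2 * (n / h)) * Bayes.LW A s := by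
  rw [Bayes.expected_liquidWelfare_eq_sum_interimLiquidWelfare A s]
  refine (sum_le_sum fun i _ => sum_le_sum fun τ _ =>
    hBNE.interimLiquidWelfare_le hh i τ _).trans ?_
  have topBid_le := Bayes.sum_expectedTopBid_le_LW hs_nob hs_nobud
  simp only [sum_add_distrib (M := ℝ) (f := fun _ => 2 * _), ← mul_sum]
  rw [Bayes.sum_sum_mul_interimFraction_add A s _ hh, ← Bayes.LW_eq_sum_interimLiquidWelfare]
  calc 2 * ((3 + n / h) * ∑ j, ∑ ℓ, Bayes.expectedTopBid A s j ℓ) + 2 * Bayes.LW A s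
      ≤ 2 * ((3 + n / h) * Bayes.LW A s) + 2 * Bayes.LW A s := by gcongr
    _ = (8 + 2 * (n / h)) * Bayes.LW A s := by ring

/-- **Liquid price of anarchy of Bayesian Nash equilibria of simultaneous second
price auctions** (share model): if every item has `h ≥ n` shares and all
strategies satisfy no over-bidding and no over-budgeting, then for every
Bayesian Nash equilibrium `s` and every type-dependent allocation of the shares
(in particular a pointwise optimal one, whose expected Liquid Welfare is `OPT`),
the expected Liquid Welfare of the allocation is at most `51.5 · LW(s)`. -/
theorem liquid_poa_bayesian_second_price {n m h : ℕ} (hh : 0 < h) (hnh : n ≤ h)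
    (A : BayesAuction n m h) (s : BayesStrategy n m h A.t)
    (hs_nob : ∀ i (τ : Fin (A.t i)) k, Bayes.NoOverbid A i τ (s.β i τ k))
    (hs_nobud : ∀ i (τ : Fin (A.t i)) k, Bayes.NoOverbudget A i τ (s.β i τ k))
    (hBNE : Bayes.IsBNE A s)
    (ALLOC : (∀ i, Fin (A.t i)) → Fin m → Fin h → Fin n) :
    ∑ θ : ∀ i, Fin (A.t i), (∏ i, A.π i (θ i)) *
        ∑ i, min (∑ j : Fin m, ∑ ℓ : Fin h,
            if ALLOC θ j ℓ = i then A.v i (θ i) j / h else 0)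
          (A.B i (θ i))
      ≤ 51.5 * Bayes.LW A s := by
  have hn : (n : ℝ) / h ≤ 1 := div_le_one_of_le₀ (by exact_mod_cast hnh) h.cast_nonneg
  refine (liquid_poa_bayesian_second_price_general hh A s hs_nob hs_nobud hBNE ALLOC).trans ?_
  exact mul_le_mul_of_nonneg_right (by linarith) (Bayes.LW_nonneg A s)
end
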